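/- arXiv:1312.2153 — 2 statements merged into one kernel-verified Lean document; each statement's English description precedes it below -/
import Mathlib

section
/- For all x < 0 and y < 0, lim_{n→∞} [P(X ≤ 1 + u_n·x, ρ_n|X| + √(1-ρ_n²)·Y ≤ 1 + u_n·y)]^n = exp(-I_α·(|x|^{1/2+α}·Υ_α((λ + (y-x)/(2λ))/√(2|x|)) + |y|^{1/2+α}·(1 + Υ_α((λ + (x-y)/(2λ))/√(2|y|))))). -/
open MeasureTheory Filter Real Set ProbabilityTheory Topology

noncomputable def Ialpha (α : ℝ) : ℝ :=
  (Real.sqrt (2 * Real.pi))⁻¹ * (Real.Gamma (α + 1) / Real.Gamma (α + 3 / 2))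

noncomputable def Upsilon (α t : ℝ) : ℝ :=
  (∫ s in Set.Icc (-1 : ℝ) (min t 1), (1 - s ^ 2) ^ α) /
    (∫ s in Set.Icc (-1 : ℝ) 1, (1 - s ^ 2) ^ α)

/-! In polar coordinates the event that a row exceeds `(1 + u x, 1 + u y)` is `1 < R * H(Θ)` for an
explicit function `H` of the angle. Since `R ≤ 1`, only directions with `H > 1` count, and they lie
within `O(√u)` of `0` or `π`. For `θ = √u s` near `0` the excess `(H(θ) - 1) / u` converges to
`max (|x| - s² / 2) (|y| - (s - 2λ)² / 2)`, the shift `2λ` being the limit of `arccos ρ / √u`; near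
`π` the first coordinate is negative and only the second parabola survives. Regular variation turns
the probabilities `P(R > 1 / H)`, normalised by `n √u`, into the power `(·)₊ ^ α` of the excess, so
dominated convergence gives `n P(exceedance) → (2π)⁻¹ (I₁ + I₂)`, one integral for each half circle.
The two parabolas cross once, which splits `I₁` into two incomplete beta integrals. The theorem
follows from `(1 - t_n / n) ^ n → exp (-t)` when `t_n → t`. -/

section MonotoneLimits

theorem tendsto_apply_of_monotone {ι β γ : Type*} {l : Filter ι}
    [LinearOrder β] [TopologicalSpace β] [OrderTopology β] [DenselyOrdered β] [NoMinOrder β]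
    [NoMaxOrder β] [LinearOrder γ] [TopologicalSpace γ] [OrderTopology γ]
    {T : ι → β → γ} {Q : β → γ} {w : ι → β} {w₀ : β} (hmono : ∀ᶠ i in l, Monotone (T i))
    (hT : ∀ c, Tendsto (fun i => T i c) l (𝓝 (Q c))) (hQ : ContinuousAt Q w₀)
    (hw : Tendsto w l (𝓝 w₀)) : Tendsto (fun i => T i (w i)) l (𝓝 (Q w₀)) := by
  refine tendsto_order.2 ⟨fun a ha => ?_, fun a ha => ?_⟩
  · have below : ∀ᶠ c in 𝓝[<] w₀, a < Q c :=
      nhdsWithin_le_nhds (hQ.eventually (lt_mem_nhds ha))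
    obtain ⟨c, hac, hcw⟩ := (below.and self_mem_nhdsWithin).exists
    filter_upwards [hmono, (hT c).eventually (lt_mem_nhds hac), hw.eventually (lt_mem_nhds hcw)]
      with i hi hai hci using hai.trans_le (hi hci.le)
  · have above : ∀ᶠ c in 𝓝[>] w₀, Q c < a :=
      nhdsWithin_le_nhds (hQ.eventually (gt_mem_nhds ha))
    obtain ⟨c, hca, hwc⟩ := (above.and self_mem_nhdsWithin).exists
    filter_upwards [hmono, (hT c).eventually (gt_mem_nhds hca), hw.eventually (gt_mem_nhds hwc)]
      with i hi hia hic using (hi hic.le).trans_lt hia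

end MonotoneLimits

section WeibullTail

/-- The limit `c ↦ c₊ ^ α` of the normalised tails of a distribution in the Weibull domain of
attraction. The indicator makes it vanish at `c = 0` also when `α = 0`, where `0 ^ 0 = 1`. -/
noncomputable def weibullTail (α : ℝ) : ℝ → ℝ :=
  (Ioi 0).indicator (· ^ α)

variable {α c : ℝ}

theorem weibullTail_of_pos (hc : 0 < c) : weibullTail α c = c ^ α :=
  indicator_of_mem (mem_Ioi.2 hc) _

theorem weibullTail_of_nonpos (hc : c ≤ 0) : weibullTail α c = 0 :=
  indicator_of_notMem (notMem_Ioi.2 hc) _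

theorem weibullTail_mul {m : ℝ} (hm : 0 < m) (c : ℝ) :
    weibullTail α (m * c) = m ^ α * weibullTail α c := by
  rcases le_or_gt c 0 with hc | hc
  · rw [weibullTail_of_nonpos hc, weibullTail_of_nonpos (mul_nonpos_of_nonneg_of_nonpos hm.le hc),
      mul_zero]
  · rw [weibullTail_of_pos hc, weibullTail_of_pos (mul_pos hm hc), mul_rpow hm.le hc.le]

theorem continuousAt_weibullTail (α : ℝ) (hc : c ≠ 0) : ContinuousAt (weibullTail α) c :=
  ContinuousOn.continuousAt_indicator (fun x hx => (continuousAt_rpow_const x α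
    (Or.inl (interior_subset hx : x ∈ Ioi 0).ne')).continuousWithinAt) (by simpa using hc)

theorem ae_parabola_ne_zero (m c : ℝ) : ∀ᵐ s : ℝ, m - (s - c) ^ 2 / 2 ≠ 0 := by
  have zeros : {s : ℝ | m - (s - c) ^ 2 / 2 = 0} ⊆ {c + √(2 * m), c - √(2 * m)} := by
    intro s hs
    have hsq : (s - c) ^ 2 = 2 * m := by linarith [mem_ofPred_eq ▸ hs]
    have habs : |s - c| = √(2 * m) := by rw [← hsq, sqrt_sq_eq_abs]
    rcases abs_choice (s - c) with h | h
    · left; linarith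
    · right; rw [mem_singleton_iff]; linarith
  simpa [ae_iff] using ((toFinite _).subset zeros).measure_zero volume

theorem ae_max_parabola_ne_zero (m₁ m₂ c₁ c₂ : ℝ) :
    ∀ᵐ s : ℝ, max (m₁ - (s - c₁) ^ 2 / 2) (m₂ - (s - c₂) ^ 2 / 2) ≠ 0 := by
  filter_upwards [ae_parabola_ne_zero m₁ c₁, ae_parabola_ne_zero m₂ c₂] with s h₁ h₂
  rcases max_choice (m₁ - (s - c₁) ^ 2 / 2) (m₂ - (s - c₂) ^ 2 / 2) with h | h <;> rwa [h]

end WeibullTail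

section BetaIntegral

open scoped Pointwise

variable {α m : ℝ}

theorem gamma_quotient_pos (hα : -1 < α) : 0 < √π * (Gamma (α + 1) / Gamma (α + 3 / 2)) :=
  mul_pos (sqrt_pos.2 pi_pos)
    (div_pos (Gamma_pos_of_pos (by linarith)) (Gamma_pos_of_pos (by linarith)))

theorem integral_rpow_mul_one_sub_rpow {a b : ℝ} (ha : -1 < a) (hb : -1 < b) :
    ∫ t in (0 : ℝ)..1, t ^ a * (1 - t) ^ b = beta (a + 1) (b + 1) := by
  have hcomplex : ((∫ t in (0 : ℝ)..1, t ^ a * (1 - t) ^ b : ℝ) : ℂ)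
      = Complex.betaIntegral ((a + 1 : ℝ) : ℂ) ((b + 1 : ℝ) : ℂ) := by
    rw [Complex.betaIntegral, ← intervalIntegral.integral_ofReal]
    refine intervalIntegral.integral_congr fun t ht => ?_
    rw [uIcc_of_le zero_le_one] at ht
    push_cast
    rw [Complex.ofReal_cpow ht.1, Complex.ofReal_cpow (by linarith [ht.2])]
    push_cast
    simp only [add_sub_cancel_right]
  rw [beta_eq_betaIntegralReal _ _ (by linarith) (by linarith), ← hcomplex, Complex.ofReal_re]

theorem two_mul_four_rpow_mul_beta_self (hα : -1 < α) :
    2 * 4 ^ α * beta (α + 1) (α + 1) = √π * (Gamma (α + 1) / Gamma (α + 3 / 2)) := by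
  have duplication := Gamma_mul_Gamma_add_half (α + 1)
  rw [show α + 1 + 1 / 2 = α + 3 / 2 by ring, show 2 * (α + 1) = α + 1 + (α + 1) by ring]
    at duplication
  have powers : (2 : ℝ) * 4 ^ α * 2 ^ (1 - (α + 1 + (α + 1))) = 1 := by
    calc (2 : ℝ) * 4 ^ α * 2 ^ (1 - (α + 1 + (α + 1)))
        = 2 ^ (1 : ℝ) * 2 ^ (2 * α) * 2 ^ (1 - (α + 1 + (α + 1))) := by
          rw [rpow_one, rpow_mul zero_le_two]; norm_num
      _ = 2 ^ (0 : ℝ) := by rw [← rpow_add two_pos, ← rpow_add two_pos]; congr 1; ring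
      _ = 1 := rpow_zero 2
  have hΓ : Gamma (α + 3 / 2) ≠ 0 := (Gamma_pos_of_pos (by linarith)).ne'
  have hΓ₂ : Gamma (α + 1 + (α + 1)) ≠ 0 := (Gamma_pos_of_pos (by linarith)).ne'
  rw [beta, mul_div_assoc', mul_div_assoc', div_eq_div_iff hΓ₂ hΓ]
  linear_combination
    Gamma (α + 1) * (2 * 4 ^ α * duplication + Gamma (α + 1 + (α + 1)) * √π * powers)

theorem integral_Icc_one_sub_sq_rpow (hα : -1 < α) :
    ∫ s in Icc (-1 : ℝ) 1, (1 - s ^ 2) ^ α = √π * (Gamma (α + 1) / Gamma (α + 3 / 2)) := by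
  have affine : ∫ s in (-1 : ℝ)..1, (1 - s ^ 2) ^ α
      = 2 * ∫ t in (0 : ℝ)..1, (1 - (2 * t - 1) ^ 2) ^ α := by
    rw [intervalIntegral.integral_comp_mul_sub (fun s => (1 - s ^ 2) ^ α) two_ne_zero 1]
    norm_num
    ring
  have factor : ∫ t in (0 : ℝ)..1, (1 - (2 * t - 1) ^ 2) ^ α
      = 4 ^ α * ∫ t in (0 : ℝ)..1, t ^ α * (1 - t) ^ α := by
    rw [← intervalIntegral.integral_const_mul]
    refine intervalIntegral.integral_congr fun t ht => ?_
    rw [uIcc_of_le zero_le_one] at ht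
    have ht' : 0 ≤ 1 - t := sub_nonneg.2 ht.2
    rw [← mul_rpow ht.1 ht', ← mul_rpow zero_le_four (mul_nonneg ht.1 ht')]
    congr 1
    ring
  rw [integral_Icc_eq_integral_Ioc, ← intervalIntegral.integral_of_le (by norm_num), affine,
    factor, integral_rpow_mul_one_sub_rpow hα hα, ← mul_assoc, two_mul_four_rpow_mul_beta_self hα]

theorem Upsilon_of_one_le (hα : -1 < α) {t : ℝ} (ht : 1 ≤ t) : Upsilon α t = 1 := by
  rw [Upsilon, min_eq_right ht, integral_Icc_one_sub_sq_rpow hα,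
    div_self (gamma_quotient_pos hα).ne']

theorem two_mul_pi_mul_Ialpha (α : ℝ) :
    2 * π * Ialpha α = √2 * (√π * (Gamma (α + 1) / Gamma (α + 3 / 2))) := by
  have hsqrt : 2 * π * (√(2 * π))⁻¹ = √2 * √π := by
    rw [← div_eq_mul_inv, div_sqrt, sqrt_mul zero_le_two]
  rw [Ialpha, ← mul_assoc, hsqrt, mul_assoc]

theorem setIntegral_Iio_weibullTail_one_sub_sq (hα : -1 < α) (t : ℝ) :
    ∫ r in Iio t, weibullTail α (1 - r ^ 2)
      = √π * (Gamma (α + 1) / Gamma (α + 3 / 2)) * Upsilon α t := by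
  have support : Iio t ∩ {r : ℝ | 0 < 1 - r ^ 2} = Ioo (-1) (min t 1) := by
    ext r
    simp only [mem_inter_iff, mem_Iio, mem_ofPred_eq, sub_pos, sq_lt_one_iff_abs_lt_one, abs_lt,
      mem_Ioo, lt_min_iff]
    tauto
  calc ∫ r in Iio t, weibullTail α (1 - r ^ 2)
      = ∫ r in Iio t, {r : ℝ | 0 < 1 - r ^ 2}.indicator (fun r => (1 - r ^ 2) ^ α) r := rfl
    _ = ∫ r in Icc (-1) (min t 1), (1 - r ^ 2) ^ α := by
      rw [setIntegral_indicator (measurableSet_lt (by fun_prop) (by fun_prop)), support,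
        integral_Icc_eq_integral_Ioo]
    _ = √π * (Gamma (α + 1) / Gamma (α + 3 / 2)) * Upsilon α t := by
      rw [Upsilon, integral_Icc_one_sub_sq_rpow hα, mul_div_cancel₀ _ (gamma_quotient_pos hα).ne']

theorem setIntegral_Iio_weibullTail_parabola (hα : -1 < α) (hm : 0 < m) (t : ℝ) :
    ∫ s in Iio t, weibullTail α (m - s ^ 2 / 2)
      = 2 * π * Ialpha α * (m ^ (1 / 2 + α) * Upsilon α (t / √(2 * m))) := by
  have hσ : 0 < √(2 * m) := sqrt_pos.2 (by linarith)
  have rescaled (r : ℝ) : weibullTail α (m - (√(2 * m) • r) ^ 2 / 2)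
      = m ^ α * weibullTail α (1 - r ^ 2) := by
    rw [← weibullTail_mul hm, smul_eq_mul, mul_pow, sq_sqrt (by linarith)]
    ring_nf
  have image : √(2 * m) • Iio (t / √(2 * m)) = Iio t := by
    rw [LinearOrderedField.smul_Iio hσ, mul_div_cancel₀ _ hσ.ne']
  have substitution := Measure.setIntegral_comp_smul_of_pos volume
    (fun s => weibullTail α (m - s ^ 2 / 2)) (Iio (t / √(2 * m))) hσ
  rw [image, Module.finrank_self, pow_one, smul_eq_mul, eq_inv_mul_iff_mul_eq₀ hσ.ne']
    at substitution
  simp_rw [rescaled] at substitution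
  rw [← substitution, integral_const_mul, setIntegral_Iio_weibullTail_one_sub_sq hα,
    two_mul_pi_mul_Ialpha, rpow_add hm, ← sqrt_eq_rpow, sqrt_mul zero_le_two]
  ring

theorem integral_weibullTail_parabola (hα : -1 < α) (hm : 0 < m) (c : ℝ) :
    ∫ s, weibullTail α (m - (s - c) ^ 2 / 2) = 2 * π * Ialpha α * m ^ (1 / 2 + α) := by
  have hσ : 0 < √(2 * m) := sqrt_pos.2 (by linarith)
  have vanish (s : ℝ) (hs : s ∉ Iio √(2 * m)) : weibullTail α (m - s ^ 2 / 2) = 0 := by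
    apply weibullTail_of_nonpos
    linarith [(sqrt_le_left (hσ.le.trans (notMem_Iio.1 hs))).1 (notMem_Iio.1 hs)]
  rw [integral_sub_right_eq_self (fun s => weibullTail α (m - s ^ 2 / 2)) c,
    ← setIntegral_eq_integral_of_forall_compl_eq_zero vanish,
    setIntegral_Iio_weibullTail_parabola hα hm, div_self hσ.ne', Upsilon_of_one_le hα le_rfl,
    mul_one]

theorem integrable_weibullTail_parabola (hα : -1 < α) (hm : 0 < m) (c : ℝ) :
    Integrable fun s => weibullTail α (m - (s - c) ^ 2 / 2) := by
  refine .of_integral_ne_zero ?_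
  rw [integral_weibullTail_parabola hα hm, two_mul_pi_mul_Ialpha]
  have := gamma_quotient_pos hα
  positivity

theorem setIntegral_Ici_weibullTail_parabola (hα : -1 < α) (hm : 0 < m) (c t : ℝ) :
    ∫ s in Ici t, weibullTail α (m - (s - c) ^ 2 / 2)
      = 2 * π * Ialpha α * (m ^ (1 / 2 + α) * Upsilon α ((c - t) / √(2 * m))) := by
  have reflection := (volume.measurePreserving_sub_left c).setIntegral_preimage_emb
    (MeasurableEquiv.subLeft c).measurableEmbedding
    (fun s => weibullTail α (m - s ^ 2 / 2)) (Iic (c - t))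
  rw [preimage_const_sub_Iic, sub_sub_cancel] at reflection
  simp_rw [sub_sq_comm c] at reflection
  rw [reflection, integral_Iic_eq_integral_Iio, setIntegral_Iio_weibullTail_parabola hα hm]

theorem integral_weibullTail_max_parabola {m₁ m₂ c : ℝ} (hα : -1 < α) (hm₁ : 0 < m₁)
    (hm₂ : 0 < m₂) (hc : 0 < c) :
    ∫ s, weibullTail α (max (m₁ - s ^ 2 / 2) (m₂ - (s - c) ^ 2 / 2)) =
      2 * π * Ialpha α * (m₁ ^ (1 / 2 + α) * Upsilon α ((c / 2 + (m₁ - m₂) / c) / √(2 * m₁)) +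
        m₂ ^ (1 / 2 + α) * Upsilon α ((c / 2 + (m₂ - m₁) / c) / √(2 * m₂))) := by
  classical
  -- The two parabolas cross exactly once, at `τ`.
  set τ := c / 2 + (m₁ - m₂) / c with hτ
  have hτ_mul : c * τ = c ^ 2 / 2 + (m₁ - m₂) := by rw [hτ]; field_simp
  have hτ_compl : c / 2 + (m₂ - m₁) / c = c - τ := by rw [hτ]; ring
  have split (s : ℝ) : weibullTail α (max (m₁ - s ^ 2 / 2) (m₂ - (s - c) ^ 2 / 2)) =
      (Iio τ).piecewise (fun s => weibullTail α (m₁ - s ^ 2 / 2))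
        (fun s => weibullTail α (m₂ - (s - c) ^ 2 / 2)) s := by
    rcases lt_or_ge s τ with hs | hs
    · rw [piecewise_eq_of_mem _ _ _ (mem_Iio.2 hs), max_eq_left (by nlinarith)]
    · rw [piecewise_eq_of_notMem _ _ _ (notMem_Iio.2 hs), max_eq_right (by nlinarith)]
  have integrable₁ : Integrable fun s => weibullTail α (m₁ - s ^ 2 / 2) := by
    simpa only [sub_zero] using integrable_weibullTail_parabola hα hm₁ 0
  rw [integral_congr_ae (.of_forall split), integral_piecewise measurableSet_Iio
    integrable₁.integrableOn (integrable_weibullTail_parabola hα hm₂ c).integrableOn, compl_Iio,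
    setIntegral_Iio_weibullTail_parabola hα hm₁, setIntegral_Ici_weibullTail_parabola hα hm₂,
    hτ_compl, mul_add]

end BetaIntegral

section AngularScale

variable {ι : Type*} {l : Filter ι} {u : ι → ℝ}

theorem tendsto_zero_of_tendsto_div {f g : ι → ℝ} {c : ℝ} (hg : ∀ i, g i ≠ 0)
    (hg0 : Tendsto g l (𝓝 0)) (hfg : Tendsto (fun i => f i / g i) l (𝓝 c)) :
    Tendsto f l (𝓝 0) :=
  (Asymptotics.isBigO_of_div_tendsto_nhds (.of_forall fun i hi => absurd hi (hg i)) c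
    hfg).trans_tendsto hg0

theorem tendsto_one_add_mul (hu0 : Tendsto u l (𝓝 0)) (c : ℝ) :
    Tendsto (fun i => 1 + u i * c) l (𝓝 1) := by
  simpa only [zero_mul, add_zero] using (hu0.mul_const c).const_add 1

theorem tendsto_sqrt_zero (hu0 : Tendsto u l (𝓝 0)) : Tendsto (fun i => √(u i)) l (𝓝 0) :=
  (continuous_sqrt.tendsto' 0 0 sqrt_zero).comp hu0

theorem one_sub_cos_eq_sq_mul_sinc_sq (t : ℝ) : 1 - cos t = t ^ 2 / 2 * sinc (t / 2) ^ 2 := by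
  have half_angle : 1 - cos t = 2 * sin (t / 2) ^ 2 := by
    rw [sin_sq_eq_half_sub, mul_div_cancel₀ t two_ne_zero]
    ring
  rcases eq_or_ne t 0 with rfl | ht
  · simp
  · rw [sinc_of_ne_zero (by simpa using ht), half_angle]
    field_simp

theorem tendsto_sinc_half_sq {t : ι → ℝ} (ht : Tendsto t l (𝓝 0)) :
    Tendsto (fun i => sinc (t i / 2) ^ 2) l (𝓝 1) := by
  have half : Tendsto (fun i => t i / 2) l (𝓝 0) := by simpa only [zero_div] using ht.div_const 2
  simpa only [one_pow, Function.comp_apply] using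
    ((continuous_sinc.tendsto' 0 1 sinc_zero).comp half).pow 2

theorem tendsto_one_sub_cos_div {t : ι → ℝ} {s : ℝ} (hupos : ∀ i, 0 < u i)
    (hu0 : Tendsto u l (𝓝 0)) (ht : Tendsto (fun i => t i / √(u i)) l (𝓝 s)) :
    Tendsto (fun i => (1 - cos (t i)) / u i) l (𝓝 (s ^ 2 / 2)) := by
  have ht0 := tendsto_zero_of_tendsto_div (fun i => (sqrt_pos.2 (hupos i)).ne')
    (tendsto_sqrt_zero hu0) ht
  rw [← mul_one (s ^ 2 / 2)]
  refine (((ht.pow 2).div_const 2).mul (tendsto_sinc_half_sq ht0)).congr fun i => ?_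
  rw [one_sub_cos_eq_sq_mul_sinc_sq, div_pow, sq_sqrt (hupos i).le]
  ring

theorem tendsto_arccos_div_sqrt {ρ : ι → ℝ} {c : ℝ} (hupos : ∀ i, 0 < u i)
    (hu0 : Tendsto u l (𝓝 0)) (hρ : ∀ᶠ i in l, ρ i ≤ 1)
    (hρu : Tendsto (fun i => (1 - ρ i) / u i) l (𝓝 c)) :
    Tendsto (fun i => arccos (ρ i) / √(u i)) l (𝓝 √(2 * c)) := by
  have hρ1 : Tendsto ρ l (𝓝 1) := by
    simpa only [sub_sub_cancel, sub_zero] using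
      (tendsto_zero_of_tendsto_div (fun i => (hupos i).ne') hu0 hρu).const_sub 1
  have hsinc := tendsto_sinc_half_sq ((continuous_arccos.tendsto' 1 0 arccos_one).comp hρ1)
  have hquot := (hρu.const_mul 2).div hsinc one_ne_zero
  rw [div_one] at hquot
  refine hquot.sqrt.congr' ?_
  filter_upwards [hρ, hρ1.eventually (lt_mem_nhds (by norm_num : (-1 : ℝ) < 1)),
    hsinc.eventually_ne one_ne_zero] with i hi hi' hsi
  replace hsi := (pow_ne_zero_iff two_ne_zero).1 hsi
  rw [Function.comp_apply] at hsi
  have hcos : 1 - ρ i = arccos (ρ i) ^ 2 / 2 * sinc (arccos (ρ i) / 2) ^ 2 := by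
    rw [← one_sub_cos_eq_sq_mul_sinc_sq, cos_arccos hi'.le hi]
  have hsquare : 2 * ((1 - ρ i) / u i) / sinc (arccos (ρ i) / 2) ^ 2 = arccos (ρ i) ^ 2 / u i := by
    rw [hcos]
    field_simp
  simp only [Pi.div_apply, Function.comp_apply]
  rw [hsquare, sqrt_div (sq_nonneg _), sqrt_sq (arccos_nonneg _)]

end AngularScale

section RescaledIntegral

variable {ι : Type*} {l : Filter ι} [l.IsCountablyGenerated]

theorem tendsto_integral_of_rescaled_dominated {E : Type*} [NormedAddCommGroup E] [NormedSpace ℝ E]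
    {f : ι → ℝ → E} {g : ℝ → E} {bound : ℝ → ℝ} {σ : ι → ℝ} {b : ℝ} (hb : 0 < b)
    (hσ : ∀ i, 0 < σ i) (hσ0 : Tendsto σ l (𝓝 0)) (hf : ∀ i, StronglyMeasurable (f i))
    (bound_nonneg : ∀ s, 0 ≤ bound s) (bound_integrable : Integrable bound)
    (h_bound : ∀ᶠ i in l, ∀ s, σ i * s ∈ Icc (-b) b → ‖σ i • f i (σ i * s)‖ ≤ bound s)
    (h_lim : ∀ᵐ s, Tendsto (fun i => σ i • f i (σ i * s)) l (𝓝 (g s))) :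
    Tendsto (fun i => ∫ θ in -b..b, f i θ) l (𝓝 (∫ s, g s)) := by
  let K (i : ι) (s : ℝ) : E := σ i • (Icc (-b) b).indicator (f i) (σ i * s)
  have substitution (i : ι) : ∫ s, K i s = ∫ θ in -b..b, f i θ := by
    rw [integral_smul, Measure.integral_comp_mul_left, integral_indicator measurableSet_Icc,
      integral_Icc_eq_integral_Ioc, ← intervalIntegral.integral_of_le (by linarith),
      abs_of_pos (inv_pos.2 (hσ i)), smul_inv_smul₀ (hσ i).ne']
  refine Tendsto.congr substitution (tendsto_integral_filter_of_dominated_convergence bound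
    (.of_forall fun i => ?_) ?_ bound_integrable ?_)
  · exact ((((hf i).indicator measurableSet_Icc).comp_measurable
      (measurable_const_mul _)).const_smul _).aestronglyMeasurable
  · filter_upwards [h_bound] with i hi
    refine .of_forall fun s => ?_
    by_cases hs : σ i * s ∈ Icc (-b) b
    · simpa only [K, indicator_of_mem hs] using hi s hs
    · simpa only [K, indicator_of_notMem hs, smul_zero, norm_zero] using bound_nonneg s
  · filter_upwards [h_lim] with s hs
    have hσs : Tendsto (fun i => σ i * s) l (𝓝 0) := by
      simpa only [zero_mul] using hσ0.mul_const s
    refine hs.congr' ?_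
    filter_upwards [hσs.eventually (Icc_mem_nhds (neg_lt_zero.2 hb) hb)] with i hi
    simp only [K, indicator_of_mem (show σ i * s ∈ Icc (-b) b from hi)]

end RescaledIntegral

section LocalProfile

variable {ι : Type*} {l : Filter ι} {u : ι → ℝ}

/-- The functions `h i` on the half circle `[-π / 2, π / 2]` peak at `0`: on the angular scale
`√(u i)` their excess over the level `1`, measured in units of `u i`, has the shape `W`, and it is
of order `u i` and confined to angles of order `√(u i)`. -/
structure LocalProfile (l : Filter ι) (u : ι → ℝ) (h : ι → ℝ → ℝ) (W : ℝ → ℝ) : Prop where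
  measurable : ∀ i, Measurable (h i)
  tendsto : ∀ s, Tendsto (fun i => (h i (√(u i) * s) - 1) / u i) l (𝓝 (W s))
  confined : ∃ M C : ℝ, ∀ᶠ i in l, ∀ θ, |θ| ≤ π / 2 → 1 < h i θ →
    |θ| ≤ M * √(u i) ∧ h i θ ≤ 1 + u i * C

namespace LocalProfile

theorem max {h₁ h₂ : ι → ℝ → ℝ} {W₁ W₂ : ℝ → ℝ} (hu : ∀ i, 0 ≤ u i)
    (H₁ : LocalProfile l u h₁ W₁) (H₂ : LocalProfile l u h₂ W₂) :
    LocalProfile l u (fun i θ => max (h₁ i θ) (h₂ i θ)) (fun s => max (W₁ s) (W₂ s)) where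
  measurable i := (H₁.measurable i).max (H₂.measurable i)
  tendsto s := ((H₁.tendsto s).max (H₂.tendsto s)).congr fun i => by
    rw [max_div_div_right (hu i), max_sub_sub_right]
  confined := by
    obtain ⟨M₁, C₁, hev₁⟩ := H₁.confined
    obtain ⟨M₂, C₂, hev₂⟩ := H₂.confined
    refine ⟨Max.max M₁ M₂, Max.max C₁ C₂, ?_⟩
    filter_upwards [hev₁, hev₂] with i hi₁ hi₂ θ hθ hmax
    rw [max_mul_of_nonneg _ _ (sqrt_nonneg _), mul_max_of_nonneg _ _ (hu i), ← max_add_add_left]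
    rcases max_choice (h₁ i θ) (h₂ i θ) with h | h
    · rw [h] at hmax ⊢
      exact (hi₁ θ hθ hmax).imp le_sup_of_le_left le_sup_of_le_left
    · rw [h] at hmax ⊢
      exact (hi₂ θ hθ hmax).imp le_sup_of_le_right le_sup_of_le_right

theorem tendsto_mul_integral [l.IsCountablyGenerated] {h : ι → ℝ → ℝ} {W p Q : ℝ → ℝ} {a : ι → ℝ}
    (H : LocalProfile l u h W) (hupos : ∀ i, 0 < u i) (hu0 : Tendsto u l (𝓝 0))
    (ha : ∀ i, 0 ≤ a i) (hp : Monotone p) (hp1 : ∀ x ≤ 1, p x = 0)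
    (hQ : ∀ᵐ s, ContinuousAt Q (W s))
    (hpQ : ∀ c, Tendsto (fun i => a i * √(u i) * p (1 + u i * c)) l (𝓝 (Q c))) :
    Tendsto (fun i => a i * ∫ θ in -(π / 2)..π / 2, p (h i θ)) l (𝓝 (∫ s, Q (W s))) := by
  obtain ⟨M, C, hconf⟩ := H.confined
  have hσ (i : ι) : 0 < √(u i) := sqrt_pos.2 (hupos i)
  have hweight (i : ι) : 0 ≤ a i * √(u i) := mul_nonneg (ha i) (hσ i).le
  have hp_nonneg (x : ℝ) : 0 ≤ p x := hp1 _ (min_le_right x 1) ▸ hp (min_le_left x 1)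
  simp_rw [← intervalIntegral.integral_const_mul]
  refine tendsto_integral_of_rescaled_dominated (f := fun i θ => a i * p (h i θ))
    (bound := (Icc (-M) M).indicator fun _ => |Q C| + 1) (half_pos pi_pos) hσ
    (tendsto_sqrt_zero hu0)
    (fun i => ((hp.measurable.comp (H.measurable i)).const_mul (a i)).stronglyMeasurable)
    (fun s => indicator_nonneg (fun _ _ => by positivity) s)
    ((integrable_indicator_iff measurableSet_Icc).2 (integrableOn_const (by simp) (by simp))) ?_ ?_
  · filter_upwards [hconf, (hpQ C).eventually (gt_mem_nhds (lt_add_one _))] with i hi hC s hs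
    rw [smul_eq_mul, mul_left_comm, ← mul_assoc,
      norm_of_nonneg (mul_nonneg (hweight i) (hp_nonneg _))]
    rcases le_or_gt (h i (√(u i) * s)) 1 with hle | hgt
    · rw [hp1 _ hle, mul_zero]
      exact indicator_nonneg (fun _ _ => by positivity) s
    · obtain ⟨hθ, hheight⟩ := hi _ (abs_le.2 hs) hgt
      rw [abs_mul, abs_of_pos (hσ i), mul_comm, mul_le_mul_iff_left₀ (hσ i)] at hθ
      rw [indicator_of_mem (show s ∈ Icc (-M) M from abs_le.1 hθ)]
      calc a i * √(u i) * p (h i (√(u i) * s)) ≤ a i * √(u i) * p (1 + u i * C) :=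
            mul_le_mul_of_nonneg_left (hp hheight) (hweight i)
        _ ≤ Q C + 1 := hC.le
        _ ≤ |Q C| + 1 := by gcongr; exact le_abs_self _
  · filter_upwards [hQ] with s hs
    refine (tendsto_apply_of_monotone (.of_forall fun i => ?_) hpQ hs (H.tendsto s)).congr
      fun i => ?_
    · intro c d hcd
      exact mul_le_mul_of_nonneg_left
        (hp (by linarith [mul_le_mul_of_nonneg_left hcd (hupos i).le])) (hweight i)
    · rw [mul_div_cancel₀ _ (hupos i).ne', add_sub_cancel, smul_eq_mul]
      ring

end LocalProfile

theorem abs_le_and_cos_div_le_of_one_lt {u z t : ℝ} (hu : 0 ≤ u) (hz : z ≤ 0)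
    (huz : -(1 / 2) ≤ u * z) (ht : |t| ≤ π) (hexceed : 1 < cos t / (1 + u * z)) :
    |t| ≤ √(-z * π ^ 2 / 2) * √u ∧ cos t / (1 + u * z) ≤ 1 + u * (-2 * z) := by
  have hdenom : 0 < 1 + u * z := by linarith
  constructor
  · rw [lt_div_iff₀ hdenom] at hexceed
    have hquad : 2 / π ^ 2 * t ^ 2 ≤ -z * u := by linarith [cos_le_one_sub_mul_cos_sq ht]
    rw [← sqrt_mul (div_nonneg (mul_nonneg (neg_nonneg.2 hz) (sq_nonneg π)) zero_le_two)]
    apply abs_le_sqrt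
    calc t ^ 2 = 2 / π ^ 2 * t ^ 2 * (π ^ 2 / 2) := by field_simp
      _ ≤ -z * u * (π ^ 2 / 2) := by gcongr
      _ = -z * π ^ 2 / 2 * u := by ring
  · rw [div_le_iff₀ hdenom]
    nlinarith [cos_le_one t, mul_nonpos_of_nonneg_of_nonpos hu hz]

theorem tendsto_cos_div_sub_one_div {t : ι → ℝ} {s : ℝ} (hupos : ∀ i, 0 < u i)
    (hu0 : Tendsto u l (𝓝 0)) (z : ℝ) (ht : Tendsto (fun i => t i / √(u i)) l (𝓝 s)) :
    Tendsto (fun i => (cos (t i) / (1 + u i * z) - 1) / u i) l (𝓝 (-z - s ^ 2 / 2)) := by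
  have hdenom := tendsto_one_add_mul hu0 z
  have hquot := ((tendsto_one_sub_cos_div hupos hu0 ht).const_sub (-z)).div hdenom one_ne_zero
  rw [div_one] at hquot
  refine hquot.congr' ?_
  filter_upwards [hdenom.eventually_ne one_ne_zero] with i hi
  have common_denom : -z - (1 - cos (t i)) / u i = (cos (t i) - (1 + u i * z)) / u i := by
    have hui := (hupos i).ne'
    field_simp
    ring
  rw [Pi.div_apply, common_denom, div_sub_one hi, div_right_comm]

theorem localProfile_cos_sub_div {φ : ι → ℝ} {c z : ℝ} (hupos : ∀ i, 0 < u i)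
    (hu0 : Tendsto u l (𝓝 0)) (hz : z ≤ 0) (hφ : Tendsto (fun i => φ i / √(u i)) l (𝓝 c)) :
    LocalProfile l u (fun i θ => cos (θ - φ i) / (1 + u i * z))
      (fun s => -z - (s - c) ^ 2 / 2) where
  measurable i := by fun_prop
  tendsto s := by
    refine tendsto_cos_div_sub_one_div hupos hu0 z ((hφ.const_sub s).congr fun i => ?_)
    rw [sub_div, mul_div_cancel_left₀ _ (sqrt_pos.2 (hupos i)).ne']
  confined := by
    refine ⟨√(-z * π ^ 2 / 2) + (|c| + 1), -2 * z, ?_⟩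
    have hφ0 := tendsto_zero_of_tendsto_div (fun i => (sqrt_pos.2 (hupos i)).ne')
      (tendsto_sqrt_zero hu0) hφ
    have huz : Tendsto (fun i => u i * z) l (𝓝 0) := by
      simpa only [zero_mul] using hu0.mul_const z
    filter_upwards [huz.eventually (le_mem_nhds (by norm_num : -(1 / 2) < (0 : ℝ))),
      hφ.abs.eventually (ge_mem_nhds (lt_add_one _)),
      hφ0.abs.eventually (ge_mem_nhds (abs_zero.trans_lt (half_pos pi_pos)))]
      with i hiz hic hiφ θ hθ hexceed
    have hangle : |θ - φ i| ≤ π := (abs_sub _ _).trans (by linarith)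
    obtain ⟨hpeak, hheight⟩ := abs_le_and_cos_div_le_of_one_lt (hupos i).le hz hiz hangle hexceed
    rw [abs_div, abs_of_pos (sqrt_pos.2 (hupos i)), div_le_iff₀ (sqrt_pos.2 (hupos i))] at hic
    have htri : |θ| ≤ |θ - φ i| + |φ i| := by
      simpa only [sub_add_cancel] using abs_add_le (θ - φ i) (φ i)
    exact ⟨by linarith, hheight⟩

end LocalProfile

section RegularVariation

variable {ι : Type*} {l : Filter ι} {α : ℝ}

theorem tendsto_mul_tail_one_sub_mul {G : ℝ → ℝ} {u a : ι → ℝ} (hG1 : ∀ r, 1 ≤ r → G r = 0)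
    (hG : ∀ x > 0, Tendsto (fun t => G (1 - t * x) / G (1 - t)) (𝓝[>] 0) (𝓝 (x ^ α)))
    (hupos : ∀ i, 0 < u i) (hu0 : Tendsto u l (𝓝 0))
    (ha : Tendsto (fun i => a i * G (1 - u i)) l (𝓝 1)) (c : ℝ) :
    Tendsto (fun i => a i * G (1 - u i * c)) l (𝓝 (weibullTail α c)) := by
  rcases le_or_gt c 0 with hc | hc
  · rw [weibullTail_of_nonpos hc]
    refine tendsto_const_nhds.congr fun i => ?_
    rw [hG1 _ (by linarith [mul_nonpos_of_nonneg_of_nonpos (hupos i).le hc]), mul_zero]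
  · rw [weibullTail_of_pos hc, ← one_mul (c ^ α)]
    have hu : Tendsto u l (𝓝[>] 0) := tendsto_nhdsWithin_iff.2 ⟨hu0, .of_forall hupos⟩
    refine (ha.mul ((hG c hc).comp hu)).congr' ?_
    filter_upwards [ha.eventually_ne one_ne_zero] with i hi
    rw [Function.comp_apply, mul_assoc, mul_div_cancel₀ _ (right_ne_zero_of_mul hi)]

theorem weibull_index_nonneg {F : ℝ → ℝ} (hF_mono : Monotone F) (hF_le : ∀ r, F r ≤ 1)
    (hWeibull : ∀ x > 0,
      Tendsto (fun t => (1 - F (1 - t * x)) / (1 - F (1 - t))) (𝓝[>] 0) (𝓝 (x ^ α))) :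
    0 ≤ α := by
  have hpow : (1 : ℝ) ^ α ≤ 2 ^ α := by
    refine le_of_tendsto_of_tendsto (hWeibull 1 one_pos) (hWeibull 2 two_pos) ?_
    filter_upwards [self_mem_nhdsWithin] with t ht
    exact div_le_div_of_nonneg_right
      (sub_le_sub_left (hF_mono (by linarith [mem_Ioi.1 ht])) 1) (sub_nonneg.2 (hF_le _))
  rw [one_rpow] at hpow
  by_contra! hneg
  exact (rpow_lt_one_of_one_lt_of_neg one_lt_two hneg).not_ge hpow

end RegularVariation

section ExceedanceProbability

variable {Ω : Type*} [MeasurableSpace Ω] {μ : Measure Ω} {R : Ω → ℝ}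

/-- The probability that a point at radius `R` in a direction of gauge `h` leaves the unit ball of
that gauge. The product form makes it vanish for `h ≤ 0` when `R` is nonnegative. -/
noncomputable def exceedProb (μ : Measure Ω) (R : Ω → ℝ) (h : ℝ) : ℝ :=
  μ.real {ω | 1 < R ω * h}

theorem exceedProb_nonneg (h : ℝ) : 0 ≤ exceedProb μ R h :=
  measureReal_nonneg

theorem exceedProb_le_one [IsProbabilityMeasure μ] (h : ℝ) : exceedProb μ R h ≤ 1 :=
  measureReal_le_one

theorem exceedProb_of_pos [IsProbabilityMeasure μ] (hRm : Measurable R) {h : ℝ} (hh : 0 < h) :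
    exceedProb μ R h = 1 - μ.real {ω | R ω ≤ 1 / h} := by
  rw [exceedProb, ← probReal_compl_eq_one_sub (measurableSet_le hRm measurable_const)]
  congr 1
  ext ω
  rw [mem_compl_iff, mem_ofPred_eq, mem_ofPred_eq, not_le, div_lt_iff₀ hh]

theorem monotone_exceedProb [IsFiniteMeasure μ] (hR : ∀ᵐ ω ∂μ, 0 ≤ R ω) :
    Monotone (exceedProb μ R) := fun _ _ h₁₂ => by
  refine ENNReal.toReal_mono (measure_ne_top _ _) (measure_mono_ae ?_)
  filter_upwards [hR] with ω hω hexceed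
  exact lt_of_lt_of_le hexceed (mul_le_mul_of_nonneg_left h₁₂ hω)

theorem exceedProb_of_le_one (hR : ∀ᵐ ω ∂μ, R ω ∈ Icc 0 1) {h : ℝ} (hh : h ≤ 1) :
    exceedProb μ R h = 0 := by
  rw [exceedProb, measureReal_def, measure_eq_zero_iff_ae_notMem.2, ENNReal.toReal_zero]
  filter_upwards [hR] with ω hω
  exact not_lt.2 ((mul_le_mul_of_nonneg_left hh hω.1).trans (by rw [mul_one]; exact hω.2))

theorem monotone_measureReal_le (μ : Measure Ω) [IsFiniteMeasure μ] (R : Ω → ℝ) :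
    Monotone fun r => μ.real {ω | R ω ≤ r} :=
  fun _ _ hrs => measureReal_mono fun _ hω => le_trans hω hrs

theorem tendsto_mul_exceedProb [IsProbabilityMeasure μ] {ι : Type*} {l : Filter ι} {α : ℝ}
    {F : ℝ → ℝ} {u a : ι → ℝ} (hRm : Measurable R) (hR : ∀ᵐ ω ∂μ, R ω ∈ Icc 0 1)
    (hF : ∀ r, F r = μ.real {ω | R ω ≤ r})
    (hWeibull : ∀ x > 0,
      Tendsto (fun t => (1 - F (1 - t * x)) / (1 - F (1 - t))) (𝓝[>] 0) (𝓝 (x ^ α)))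
    (hupos : ∀ i, 0 < u i) (hu0 : Tendsto u l (𝓝 0)) (ha : ∀ i, 0 ≤ a i)
    (haF : Tendsto (fun i => a i * (1 - F (1 - u i))) l (𝓝 1)) (c : ℝ) :
    Tendsto (fun i => a i * exceedProb μ R (1 + u i * c)) l (𝓝 (weibullTail α c)) := by
  have hp (h : ℝ) (hh : 0 < h) : exceedProb μ R h = 1 - F (1 / h) := by
    rw [exceedProb_of_pos hRm hh, hF]
  rcases le_or_gt c 0 with hc | hc
  · rw [weibullTail_of_nonpos hc]
    refine tendsto_const_nhds.congr fun i => ?_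
    rw [exceedProb_of_le_one hR (by linarith [mul_nonpos_of_nonneg_of_nonpos (hupos i).le hc]),
      mul_zero]
  · have hFmono : Monotone F := funext hF ▸ monotone_measureReal_le μ R
    have hF1 (r : ℝ) (hr : 1 ≤ r) : 1 - F r = 0 := by
      have hr₀ : 0 < r := one_pos.trans_le hr
      rw [← one_div_one_div r, ← hp _ (one_div_pos.2 hr₀),
        exceedProb_of_le_one hR ((div_le_one hr₀).2 hr)]
    -- `1 / (1 + u c) = 1 - u w` with `w = c / (1 + u c) → c`
    have hw : Tendsto (fun i => c / (1 + u i * c)) l (𝓝 (c / 1)) :=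
      tendsto_const_nhds.div (tendsto_one_add_mul hu0 c) one_ne_zero
    rw [div_one] at hw
    have hmono : ∀ᶠ i in l, Monotone fun c => a i * (1 - F (1 - u i * c)) :=
      .of_forall fun i c₁ c₂ h₁₂ => mul_le_mul_of_nonneg_left
        (sub_le_sub_left (hFmono (sub_le_sub_left
          (mul_le_mul_of_nonneg_left h₁₂ (hupos i).le) 1)) 1) (ha i)
    refine (tendsto_apply_of_monotone hmono (tendsto_mul_tail_one_sub_mul (G := fun r => 1 - F r)
      hF1 hWeibull hupos hu0 haF) (continuousAt_weibullTail α hc.ne') hw).congr fun i => ?_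
    have hpos : 0 < 1 + u i * c := by linarith [mul_pos (hupos i) hc]
    rw [hp _ hpos]
    congr 3
    field_simp
    ring

theorem measureReal_prodMk_mem_eq_integral [IsFiniteMeasure μ] {β γ : Type*} [MeasurableSpace β]
    [MeasurableSpace γ] {f : Ω → β} {g : Ω → γ} (hf : Measurable f) (hg : Measurable g)
    (hfg : IndepFun f g μ) {s : Set (β × γ)} (hs : MeasurableSet s) :
    μ.real {ω | (f ω, g ω) ∈ s} = ∫ x, μ.real {ω | (x, g ω) ∈ s} ∂(μ.map f) := by
  have section_eq (x : β) :
      μ.real {ω | (x, g ω) ∈ s} = ((μ.map g) (Prod.mk x ⁻¹' s)).toReal := by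
    rw [Measure.map_apply hg (measurable_prodMk_left hs)]
    rfl
  simp_rw [section_eq]
  rw [integral_toReal (measurable_measure_prodMk_left hs).aemeasurable
    (.of_forall fun x => measure_lt_top _ _), ← Measure.prod_apply hs,
    ← (indepFun_iff_map_prod_eq_prod_map_map hf.aemeasurable hg.aemeasurable).1 hfg,
    Measure.map_apply (hf.prodMk hg) hs]
  rfl

end ExceedanceProbability

section AngularReduction

theorem setIntegral_Ioo_neg_pi_pi_of_periodic {E : Type*} [NormedAddCommGroup E] [NormedSpace ℝ E]
    {f : ℝ → E} (hf : Function.Periodic f (2 * π))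
    (hfi : ∀ a b, IntervalIntegrable f volume a b) :
    ∫ θ in Ioo (-π) π, f θ =
      (∫ θ in -(π / 2)..π / 2, f θ) + ∫ θ in -(π / 2)..π / 2, f (π - θ) := by
  have shift := hf.intervalIntegral_add_eq (-π) (-(π / 2))
  rw [show -π + 2 * π = π by ring] at shift
  rw [← integral_Ioc_eq_integral_Ioo, ← intervalIntegral.integral_of_le (by linarith [pi_pos]),
    shift, intervalIntegral.integral_comp_sub_left,
    ← intervalIntegral.integral_add_adjacent_intervals (hfi _ (π / 2)) (hfi _ _)]
  congr 2 <;> ring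

/-- In polar coordinates the row lies in `(-∞, a] × (-∞, b]` exactly when its radius times
`rowGauge a b ρ` of its angle is at most `1`. -/
noncomputable def rowGauge (a b ρ θ : ℝ) : ℝ :=
  max (cos θ / a) ((ρ * |cos θ| + √(1 - ρ ^ 2) * sin θ) / b)

theorem measurable_rowGauge (a b ρ : ℝ) : Measurable (rowGauge a b ρ) := by
  unfold rowGauge
  fun_prop

theorem periodic_rowGauge (a b ρ : ℝ) : Function.Periodic (rowGauge a b ρ) (2 * π) := fun θ => by
  simp only [rowGauge, cos_add_two_pi, sin_add_two_pi]

variable {a b ρ θ : ℝ}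

theorem one_lt_mul_rowGauge_iff {r : ℝ} (hr : 0 ≤ r) (ha : 0 < a) (hb : 0 < b) :
    1 < r * rowGauge a b ρ θ ↔
      ¬ (r * cos θ ≤ a ∧ ρ * |r * cos θ| + √(1 - ρ ^ 2) * (r * sin θ) ≤ b) := by
  have homogeneous : ρ * |r * cos θ| + √(1 - ρ ^ 2) * (r * sin θ)
      = r * (ρ * |cos θ| + √(1 - ρ ^ 2) * sin θ) := by
    rw [abs_mul, abs_of_nonneg hr]
    ring
  rw [rowGauge, mul_max_of_nonneg _ _ hr, lt_max_iff, mul_div_assoc', mul_div_assoc',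
    one_lt_div ha, one_lt_div hb, homogeneous, not_and_or, not_le, not_le]

theorem rowGauge_of_cos_nonneg (hρ : ρ ∈ Icc (-1) 1) (hθ : 0 ≤ cos θ) :
    rowGauge a b ρ θ = max (cos θ / a) (cos (θ - arccos ρ) / b) := by
  rw [rowGauge, abs_of_nonneg hθ, cos_sub, cos_arccos hρ.1 hρ.2, sin_arccos, mul_comm ρ,
    mul_comm (√_)]

theorem rowGauge_pi_sub_of_cos_nonneg (hρ : ρ ∈ Icc (-1) 1) (hθ : 0 ≤ cos θ) :
    rowGauge a b ρ (π - θ) = max (-cos θ / a) (cos (θ - arccos ρ) / b) := by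
  rw [rowGauge, cos_pi_sub, sin_pi_sub, abs_neg, abs_of_nonneg hθ, cos_sub,
    cos_arccos hρ.1 hρ.2, sin_arccos, mul_comm ρ, mul_comm (√_)]

variable {Ω : Type*} [MeasurableSpace Ω] {μ : Measure Ω} [IsProbabilityMeasure μ] {R Θ : Ω → ℝ}

theorem exceedProb_rowGauge_pi_sub (hR : ∀ᵐ ω ∂μ, R ω ∈ Icc 0 1) (ha : 0 < a)
    (hρ : ρ ∈ Icc (-1) 1) (hθ : 0 ≤ cos θ) :
    exceedProb μ R (rowGauge a b ρ (π - θ)) = exceedProb μ R (cos (θ - arccos ρ) / b) := by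
  have first_coordinate : exceedProb μ R (-cos θ / a) = 0 :=
    exceedProb_of_le_one hR
      ((div_nonpos_of_nonpos_of_nonneg (neg_nonpos.2 hθ) ha.le).trans zero_le_one)
  rw [rowGauge_pi_sub_of_cos_nonneg hρ hθ,
    (monotone_exceedProb (hR.mono fun _ h => h.1)).map_max, first_coordinate,
    max_eq_right (exceedProb_nonneg _)]

theorem integral_exceedProb_rowGauge (hR : ∀ᵐ ω ∂μ, R ω ∈ Icc 0 1) (ha : 0 < a)
    (hρ : ρ ∈ Icc (-1) 1) :
    ∫ θ in Ioo (-π) π, exceedProb μ R (rowGauge a b ρ θ) =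
      (∫ θ in -(π / 2)..π / 2, exceedProb μ R (max (cos θ / a) (cos (θ - arccos ρ) / b))) +
        ∫ θ in -(π / 2)..π / 2, exceedProb μ R (cos (θ - arccos ρ) / b) := by
  have hmono := monotone_exceedProb (hR.mono fun _ h => h.1)
  have integrable (c d : ℝ) :
      IntervalIntegrable (fun θ => exceedProb μ R (rowGauge a b ρ θ)) volume c d :=
    intervalIntegrable_iff.2 <| Measure.integrableOn_of_bounded (M := 1) (by simp)
      (hmono.measurable.comp (measurable_rowGauge a b ρ)).aestronglyMeasurable
      (.of_forall fun θ =>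
        (norm_of_nonneg (exceedProb_nonneg _)).trans_le (exceedProb_le_one _))
  have hcos {θ : ℝ} (hθ : θ ∈ uIcc (-(π / 2)) (π / 2)) : 0 ≤ cos θ :=
    cos_nonneg_of_mem_Icc (uIcc_of_le (neg_le_self (half_pos pi_pos).le) ▸ hθ)
  refine (setIntegral_Ioo_neg_pi_pi_of_periodic
    (f := fun θ => exceedProb μ R (rowGauge a b ρ θ))
    ((periodic_rowGauge a b ρ).comp (exceedProb μ R)) integrable).trans ?_
  congr 1
  · refine intervalIntegral.integral_congr fun θ hθ => ?_
    rw [rowGauge_of_cos_nonneg hρ (hcos hθ)]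
  · exact intervalIntegral.integral_congr fun θ hθ =>
      exceedProb_rowGauge_pi_sub hR ha hρ (hcos hθ)

/-- The joint distribution function, at `(a, b)`, of the row
`(X, ρ * |X| + √(1 - ρ ^ 2) * Y)` with `X = R cos Θ` and `Y = R sin Θ`. -/
noncomputable def rowCdf (μ : Measure Ω) (R Θ : Ω → ℝ) (ρ a b : ℝ) : ℝ :=
  μ.real {ω | R ω * cos (Θ ω) ≤ a ∧
    ρ * |R ω * cos (Θ ω)| + √(1 - ρ ^ 2) * (R ω * sin (Θ ω)) ≤ b}

theorem one_sub_rowCdf (hRm : Measurable R) (hΘm : Measurable Θ) (hR : ∀ᵐ ω ∂μ, 0 ≤ R ω)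
    (hindep : IndepFun R Θ μ) (ha : 0 < a) (hb : 0 < b) :
    1 - rowCdf μ R Θ ρ a b = ∫ θ, exceedProb μ R (rowGauge a b ρ θ) ∂(μ.map Θ) := by
  have hS : MeasurableSet {q : ℝ × ℝ | 1 < q.2 * rowGauge a b ρ q.1} :=
    measurableSet_lt measurable_const
      (measurable_snd.mul ((measurable_rowGauge a b ρ).comp measurable_fst))
  rw [rowCdf, ← probReal_compl_eq_one_sub (by measurability)]
  refine Eq.trans (measureReal_congr ?_)
    (measureReal_prodMk_mem_eq_integral hΘm hRm hindep.symm hS)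
  filter_upwards [hR] with ω hω
  exact propext (one_lt_mul_rowGauge_iff hω ha hb).symm

theorem one_sub_rowCdf_of_uniform (hRm : Measurable R) (hΘm : Measurable Θ)
    (hR : ∀ᵐ ω ∂μ, R ω ∈ Icc 0 1)
    (hΘunif : μ.map Θ = (ENNReal.ofReal (2 * π))⁻¹ • volume.restrict (Ioo (-π) π))
    (hindep : IndepFun R Θ μ) (ha : 0 < a) (hb : 0 < b) (hρ : ρ ∈ Icc (-1) 1) :
    1 - rowCdf μ R Θ ρ a b = (2 * π)⁻¹ *
      ((∫ θ in -(π / 2)..π / 2, exceedProb μ R (max (cos θ / a) (cos (θ - arccos ρ) / b))) +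
        ∫ θ in -(π / 2)..π / 2, exceedProb μ R (cos (θ - arccos ρ) / b)) := by
  rw [one_sub_rowCdf hRm hΘm (hR.mono fun _ h => h.1) hindep ha hb, hΘunif, integral_smul_measure,
    integral_exceedProb_rowGauge hR ha hρ, ENNReal.toReal_inv,
    ENNReal.toReal_ofReal two_pi_pos.le, smul_eq_mul]

end AngularReduction

section RowTail

variable {Ω ι : Type*} [MeasurableSpace Ω] {μ : Measure Ω} [IsProbabilityMeasure μ] {R Θ : Ω → ℝ}
  {l : Filter ι} {F : ℝ → ℝ} {α : ℝ} {u ρ a : ι → ℝ} {lam x y : ℝ}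

theorem tendsto_mul_integral_exceedProb [l.IsCountablyGenerated] {h : ι → ℝ → ℝ} {W : ℝ → ℝ}
    (hRm : Measurable R) (hR : ∀ᵐ ω ∂μ, R ω ∈ Icc 0 1) (hF : ∀ r, F r = μ.real {ω | R ω ≤ r})
    (hWeibull : ∀ x > 0,
      Tendsto (fun t => (1 - F (1 - t * x)) / (1 - F (1 - t))) (𝓝[>] 0) (𝓝 (x ^ α)))
    (hupos : ∀ i, 0 < u i) (hu0 : Tendsto u l (𝓝 0)) (ha : ∀ i, 0 ≤ a i)
    (haF : Tendsto (fun i => a i * √(u i) * (1 - F (1 - u i))) l (𝓝 1))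
    (H : LocalProfile l u h W) (hW : ∀ᵐ s, W s ≠ 0) :
    Tendsto (fun i => a i * ∫ θ in -(π / 2)..π / 2, exceedProb μ R (h i θ)) l
      (𝓝 (∫ s, weibullTail α (W s))) :=
  H.tendsto_mul_integral hupos hu0 ha (monotone_exceedProb (hR.mono fun _ h => h.1))
    (fun _ => exceedProb_of_le_one hR) (hW.mono fun _ => continuousAt_weibullTail α)
    (tendsto_mul_exceedProb hRm hR hF hWeibull hupos hu0
      (fun i => mul_nonneg (ha i) (sqrt_nonneg _)) haF)

theorem eventually_mem_Icc_neg_one_one {c : ℝ} (hupos : ∀ i, 0 < u i) (hu0 : Tendsto u l (𝓝 0))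
    (hc : 0 < c) (hρu : Tendsto (fun i => (1 - ρ i) / u i) l (𝓝 c)) :
    ∀ᶠ i in l, ρ i ∈ Icc (-1) 1 := by
  have hgap := tendsto_zero_of_tendsto_div (fun i => (hupos i).ne') hu0 hρu
  filter_upwards [hρu.eventually (lt_mem_nhds hc), hgap.eventually (gt_mem_nhds two_pos)]
    with i hpos hsmall
  have := (div_pos_iff_of_pos_right (hupos i)).1 hpos
  exact ⟨by linarith, by linarith⟩

theorem tendsto_mul_one_sub_rowCdf [l.IsCountablyGenerated] (hRm : Measurable R)
    (hΘm : Measurable Θ) (hR : ∀ᵐ ω ∂μ, R ω ∈ Icc 0 1)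
    (hΘunif : μ.map Θ = (ENNReal.ofReal (2 * π))⁻¹ • volume.restrict (Ioo (-π) π))
    (hindep : IndepFun R Θ μ) (hF : ∀ r, F r = μ.real {ω | R ω ≤ r})
    (hWeibull : ∀ x > 0,
      Tendsto (fun t => (1 - F (1 - t * x)) / (1 - F (1 - t))) (𝓝[>] 0) (𝓝 (x ^ α)))
    (hupos : ∀ i, 0 < u i) (hu0 : Tendsto u l (𝓝 0)) (ha : ∀ i, 0 ≤ a i)
    (haF : Tendsto (fun i => a i * √(u i) * (1 - F (1 - u i))) l (𝓝 1)) (hlam : 0 < lam)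
    (hHR : Tendsto (fun i => (1 - ρ i) / u i) l (𝓝 (2 * lam ^ 2))) (hx : x < 0) (hy : y < 0) :
    Tendsto (fun i => a i * (1 - rowCdf μ R Θ (ρ i) (1 + u i * x) (1 + u i * y))) l
      (𝓝 (Ialpha α *
        ((-x) ^ (1 / 2 + α) * Upsilon α ((lam + (y - x) / (2 * lam)) / √(2 * -x)) +
          (-y) ^ (1 / 2 + α) * (1 + Upsilon α ((lam + (x - y) / (2 * lam)) / √(2 * -y)))))) := by
  have hα : -1 < α := neg_one_lt_zero.trans_le <| weibull_index_nonneg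
    (funext hF ▸ monotone_measureReal_le μ R) (fun r => hF r ▸ measureReal_le_one) hWeibull
  have hρ := eventually_mem_Icc_neg_one_one hupos hu0 (by positivity) hHR
  have hangle : Tendsto (fun i => arccos (ρ i) / √(u i)) l (𝓝 (2 * lam)) := by
    convert tendsto_arccos_div_sqrt hupos hu0 (hρ.mono fun _ h => h.2) hHR using 2
    rw [← sqrt_sq (mul_pos two_pos hlam).le]
    ring_nf
  have profile₁ : LocalProfile l u (fun i θ => cos θ / (1 + u i * x))
      (fun s => -x - s ^ 2 / 2) := by
    simpa only [sub_zero] using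
      localProfile_cos_sub_div (φ := fun _ => 0) (c := 0) hupos hu0 hx.le
        (by simpa using tendsto_const_nhds)
  have profile₂ := localProfile_cos_sub_div hupos hu0 hy.le hangle
  have right_half := tendsto_mul_integral_exceedProb hRm hR hF hWeibull hupos hu0 ha haF
    (profile₁.max (fun i => (hupos i).le) profile₂)
    (by simpa only [sub_zero] using ae_max_parabola_ne_zero (-x) (-y) 0 (2 * lam))
  have left_half := tendsto_mul_integral_exceedProb hRm hR hF hWeibull hupos hu0 ha haF
    profile₂ (ae_parabola_ne_zero (-y) (2 * lam))
  rw [integral_weibullTail_max_parabola hα (neg_pos.2 hx) (neg_pos.2 hy) (by positivity)]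
    at right_half
  rw [integral_weibullTail_parabola hα (neg_pos.2 hy)] at left_half
  convert ((right_half.add left_half).const_mul (2 * π)⁻¹).congr' ?_ using 2
  · rw [mul_div_cancel_left₀ lam two_ne_zero, neg_sub_neg, neg_sub_neg]
    field_simp
    ring
  · filter_upwards [hρ, (tendsto_one_add_mul hu0 x).eventually (lt_mem_nhds one_pos),
      (tendsto_one_add_mul hu0 y).eventually (lt_mem_nhds one_pos)] with i hρi hxi hyi
    rw [one_sub_rowCdf_of_uniform hRm hΘm hR hΘunif hindep hxi hyi hρi]
    ring

end RowTail

theorem maxima_half_skew_weibull_joint_general {Ω : Type*} [MeasurableSpace Ω] {μ : Measure Ω}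
    [IsProbabilityMeasure μ] {R Θ : Ω → ℝ} (hRm : Measurable R) (hΘm : Measurable Θ)
    (hR : ∀ᵐ ω ∂μ, R ω ∈ Icc 0 1)
    (hΘunif : μ.map Θ = (ENNReal.ofReal (2 * π))⁻¹ • volume.restrict (Ioo (-π) π))
    (hindep : IndepFun R Θ μ) {F : ℝ → ℝ} (hF : ∀ r, F r = μ.real {ω | R ω ≤ r}) {α : ℝ}
    (hWeibull : ∀ x > 0,
      Tendsto (fun t => (1 - F (1 - t * x)) / (1 - F (1 - t))) (𝓝[>] 0) (𝓝 (x ^ α)))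
    {u : ℕ → ℝ} (hupos : ∀ n, 0 < u n) (hu0 : Tendsto u atTop (𝓝 0))
    (hun : Tendsto (fun n : ℕ => (n : ℝ) * √(u n) * (1 - F (1 - u n))) atTop (𝓝 1))
    {ρ : ℕ → ℝ} {lam : ℝ} (hlam : 0 < lam)
    (hHR : Tendsto (fun n : ℕ => (1 - ρ n) / u n) atTop (𝓝 (2 * lam ^ 2)))
    {x y : ℝ} (hx : x < 0) (hy : y < 0) :
    Tendsto (fun n : ℕ => rowCdf μ R Θ (ρ n) (1 + u n * x) (1 + u n * y) ^ n) atTop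
      (𝓝 (exp (-(Ialpha α *
        (|x| ^ (1 / 2 + α) * Upsilon α ((lam + (y - x) / (2 * lam)) / √(2 * |x|)) +
          |y| ^ (1 / 2 + α) *
            (1 + Upsilon α ((lam + (x - y) / (2 * lam)) / √(2 * |y|)))))))) := by
  have tail := tendsto_mul_one_sub_rowCdf hRm hΘm hR hΘunif hindep hF hWeibull
    hupos hu0 (fun n => n.cast_nonneg) hun hlam hHR hx hy
  rw [abs_of_neg hx, abs_of_neg hy]
  refine (tendsto_one_add_pow_exp_of_tendsto (tail.neg.congr fun n => (mul_neg _ _).symm)).congr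
    fun n => ?_
  rw [neg_sub, add_sub_cancel]

theorem maxima_half_skew_weibull_joint
{Ω : Type*} [MeasurableSpace Ω] (μ : Measure Ω) [IsProbabilityMeasure μ]
    (R Θ : Ω → ℝ) (hRm : Measurable R) (hΘm : Measurable Θ)
    (hRpos : ∀ᵐ ω ∂μ, 0 < R ω)
    (hΘunif : μ.map Θ = (ENNReal.ofReal (2 * π))⁻¹ • volume.restrict (Ioo (-π) π))
    (hindep : IndepFun R Θ μ)
    (X Y : Ω → ℝ)
    (hX : X = fun ω => R ω * Real.cos (Θ ω))
    (hY : Y = fun ω => R ω * Real.sin (Θ ω))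
    (F : ℝ → ℝ)
    (hF : F = fun x => (μ {ω | R ω ≤ x}).toReal)
    (hend1 : ∀ x < 1, F x < 1) (hend2 : ∀ x, 1 ≤ x → F x = 1)
    (α : ℝ) (hα : 0 < α)
    (hWeibull : ∀ x > 0, Tendsto (fun t => (1 - F (1 - t * x)) / (1 - F (1 - t)))
      (nhdsWithin 0 (Ioi 0)) (𝓝 (x ^ α)))
    (u : ℕ → ℝ) (hupos : ∀ n, 0 < u n) (hudec : StrictAnti u)
    (hu0 : Tendsto u atTop (𝓝 0))
    (hun : Tendsto (fun n : ℕ => (n : ℝ) * Real.sqrt (u n) * (1 - F (1 - u n))) atTop (𝓝 1))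
    (ρ : ℕ → ℝ) (hρ : ∀ n, ρ n ∈ Ioc (0 : ℝ) 1)
    (lam : ℝ) (hlam : 0 < lam)
    (hHR : Tendsto (fun n : ℕ => (1 - ρ n) / u n) atTop (𝓝 (2 * lam ^ 2))) :
    ∀ x < (0 : ℝ), ∀ y < (0 : ℝ),
      Tendsto (fun n : ℕ =>
          ((μ {ω | X ω ≤ 1 + u n * x ∧
            ρ n * |X ω| + Real.sqrt (1 - ρ n ^ 2) * Y ω ≤ 1 + u n * y}).toReal) ^ n)
        atTop (𝓝 (Real.exp (-(Ialpha α *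
          (|x| ^ (1 / 2 + α) * Upsilon α ((lam + (y - x) / (2 * lam)) / Real.sqrt (2 * |x|)) +
           |y| ^ (1 / 2 + α) *
             (1 + Upsilon α ((lam + (x - y) / (2 * lam)) / Real.sqrt (2 * |y|)))))))) := by
  intro x hx y hy
  subst hX hY hF
  have hRle : ∀ᵐ ω ∂μ, R ω ≤ 1 := (mem_ae_iff_prob_eq_one (measurableSet_le hRm
    measurable_const)).2 ((ENNReal.toReal_eq_one_iff _).1 (hend2 1 le_rfl))
  exact maxima_half_skew_weibull_joint_general hRm hΘm
    (hRpos.mp (hRle.mono fun _ hle hpos => ⟨hpos.le, hle⟩)) hΘunif hindep (fun _ => rfl)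
    hWeibull hupos hu0 hun hlam hHR hx hy
end

section
/- For all x < 0 and y < 0, lim_{n→∞} n·P(X > 1 + u_n·x, ρ_n|X| + √(1-ρ_n²)·Y > 1 + u_n·y) = I_α·(|x|^{1/2+α}·(1 - Υ_α((λ + (y-x)/(2λ))/√(2|x|))) + |y|^{1/2+α}·(1 - Υ_α((λ + (x-y)/(2λ))/√(2|y|)))). -/
open MeasureTheory Filter Real Set ProbabilityTheory Topology

/-!
Put `Θ = √u · s`. Given `Θ`, the joint exceedance is the event that `R` exceeds a threshold
`1 - u · q`, where `q` tends to the minimum of the two parabolas `-x - s² / 2` and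
`-y - (s - 2λ)² / 2`: the rotation by `arccos ρ` shifts the rescaled angle by `2λ`. By regular
variation the conditional probability, divided by `P(R > 1 - u)`, tends to the `α`-th power of the
positive part of this minimum, and since only bounded `s` contribute, the integrals over `s`
converge. The parabolas cross exactly once, and on each side of the crossing point the limiting
integral is an incomplete symmetric Beta integral, whence the factors `I_α (1 - Υ_α)`.
-/

section BetaIntegral

lemma intervalIntegral_rpow_mul_one_sub_rpow {a b : ℝ} (ha : 0 < a) (hb : 0 < b) :
    ∫ x in (0 : ℝ)..1, x ^ (a - 1) * (1 - x) ^ (b - 1) = beta a b := by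
  have hcongr : ∫ x in (0 : ℝ)..1, (x : ℂ) ^ ((a : ℂ) - 1) * (1 - (x : ℂ)) ^ ((b : ℂ) - 1)
      = ∫ x in (0 : ℝ)..1, ((x ^ (a - 1) * (1 - x) ^ (b - 1) : ℝ) : ℂ) := by
    refine intervalIntegral.integral_congr fun x hx => ?_
    rw [uIcc_of_le zero_le_one] at hx
    simp only [Complex.ofReal_mul, Complex.ofReal_cpow hx.1,
      Complex.ofReal_cpow (sub_nonneg.2 hx.2), Complex.ofReal_sub, Complex.ofReal_one]
  rw [beta_eq_betaIntegralReal a b ha hb, Complex.betaIntegral, hcongr,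
    intervalIntegral.integral_ofReal, Complex.ofReal_re]

lemma two_mul_four_rpow_mul_beta {α : ℝ} (hα : -1 < α) :
    2 * 4 ^ α * beta (α + 1) (α + 1) = √π * (Gamma (α + 1) / Gamma (α + 3 / 2)) := by
  have hdup : Gamma (α + 1) * Gamma (α + 3 / 2) * (2 * 4 ^ α) = Gamma (2 * (α + 1)) * √π := by
    have h := Real.Gamma_mul_Gamma_add_half (α + 1)
    have hpow : (2 : ℝ) ^ (1 - 2 * (α + 1)) * (2 * 4 ^ α) = 1 := by
      rw [show (4 : ℝ) = 2 ^ (2 : ℝ) by norm_num, ← rpow_mul zero_le_two, mul_left_comm,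
        ← rpow_add two_pos, show 1 - 2 * (α + 1) + 2 * α = -1 by ring, rpow_neg_one,
        mul_inv_cancel₀ two_ne_zero]
    rw [show α + 1 + 1 / 2 = α + 3 / 2 by ring] at h
    rw [h, mul_right_comm, mul_assoc _ _ (2 * 4 ^ α), hpow, mul_one]
  have hpos : 0 < Gamma (α + 3 / 2) := Gamma_pos_of_pos (by linarith)
  have hpos' : 0 < Gamma (2 * (α + 1)) := Gamma_pos_of_pos (by linarith)
  rw [beta, ← two_mul, mul_div_assoc', mul_div_assoc', div_eq_div_iff hpos'.ne' hpos.ne']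
  linear_combination Gamma (α + 1) * hdup

lemma setIntegral_one_sub_sq_rpow {α : ℝ} (hα : -1 < α) :
    ∫ s in Icc (-1 : ℝ) 1, (1 - s ^ 2) ^ α = √2 * π * Ialpha α := by
  have hsubst : ∫ x in (0 : ℝ)..1, (1 - (2 * x - 1) ^ 2) ^ α = 4 ^ α * beta (α + 1) (α + 1) := by
    rw [← intervalIntegral_rpow_mul_one_sub_rpow (by linarith) (by linarith),
      ← intervalIntegral.integral_const_mul]
    refine intervalIntegral.integral_congr fun x hx => ?_
    rw [uIcc_of_le zero_le_one] at hx
    have hx' : 0 ≤ 1 - x := sub_nonneg.2 hx.2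
    simp only [add_sub_cancel_right]
    rw [← mul_rpow hx.1 hx', ← mul_rpow zero_le_four (mul_nonneg hx.1 hx')]
    ring_nf
  have hscale := intervalIntegral.mul_integral_comp_mul_sub (a := 0) (b := 1)
    (f := fun s : ℝ => (1 - s ^ 2) ^ α) (c := 2) (d := 1)
  norm_num only [hsubst, ← mul_assoc] at hscale
  rw [integral_Icc_eq_integral_Ioc, ← intervalIntegral.integral_of_le (by norm_num), ← hscale,
    two_mul_four_rpow_mul_beta hα, Ialpha, sqrt_mul zero_le_two]
  field_simp
  rw [sq_sqrt pi_pos.le, mul_comm]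

lemma Ialpha_pos {α : ℝ} (hα : -1 < α) : 0 < Ialpha α := by
  have h₁ : 0 < Gamma (α + 1) := Gamma_pos_of_pos (by linarith)
  have h₂ : 0 < Gamma (α + 3 / 2) := Gamma_pos_of_pos (by linarith)
  unfold Ialpha
  positivity

lemma setIntegral_Ioi_one_sub_sq_rpow {α : ℝ} (hα : -1 < α) (t : ℝ) :
    ∫ s in Ioi t, (Icc (-1 : ℝ) 1).indicator (fun s => (1 - s ^ 2) ^ α) s
      = √2 * π * Ialpha α * (1 - Upsilon α t) := by
  set k : ℝ → ℝ := (Icc (-1 : ℝ) 1).indicator fun s => (1 - s ^ 2) ^ α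
  have htotal : ∫ s, k s = √2 * π * Ialpha α := by
    rw [integral_indicator measurableSet_Icc, setIntegral_one_sub_sq_rpow hα]
  have hpos : 0 < √2 * π * Ialpha α := mul_pos (by positivity) (Ialpha_pos hα)
  have hint : Integrable k := .of_integral_ne_zero (htotal ▸ hpos.ne')
  have hIic : ∫ s in Iic t, k s = ∫ s in Icc (-1 : ℝ) (min t 1), (1 - s ^ 2) ^ α := by
    rw [setIntegral_indicator measurableSet_Icc, ← Ici_inter_Iic, inter_left_comm, Iic_inter_Iic,
      Ici_inter_Iic]
  have hsplit := intervalIntegral.integral_Iic_add_Ioi (b := t) hint.integrableOn hint.integrableOn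
  rw [Upsilon, ← hIic, setIntegral_one_sub_sq_rpow hα, mul_sub, mul_div_cancel₀ _ hpos.ne']
  linarith

end BetaIntegral

section ParabolicCap

/-- The `α`-th power of the positive part of the parabola `s ↦ a - s² / 2`. With `a = -x` and
`Θ = √u · s`, it is the limit of `P(R cos Θ > 1 + u x | Θ) / P(R > 1 - u)` as `u ↓ 0`. -/
noncomputable def capPow (α a s : ℝ) : ℝ :=
  (max (a - s ^ 2 / 2) 0) ^ α

variable {α : ℝ}

lemma capPow_le_capPow (hα : 0 ≤ α) {a b s t : ℝ} (h : a - s ^ 2 / 2 ≤ b - t ^ 2 / 2) :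
    capPow α a s ≤ capPow α b t :=
  rpow_le_rpow (le_max_right _ _) (max_le_max_right 0 h) hα

lemma capPow_sqrt_mul (hα : α ≠ 0) {a : ℝ} (ha : 0 < a) (t : ℝ) :
    capPow α a (√(2 * a) * t)
      = a ^ α * (Icc (-1 : ℝ) 1).indicator (fun s => (1 - s ^ 2) ^ α) t := by
  have hparabola : a - (√(2 * a) * t) ^ 2 / 2 = a * (1 - t ^ 2) := by
    rw [mul_pow, sq_sqrt (by positivity)]
    ring
  rw [capPow, hparabola]
  by_cases ht : t ∈ Icc (-1 : ℝ) 1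
  · have hcap : 0 ≤ 1 - t ^ 2 := sub_nonneg.2 (sq_le_one_iff_abs_le_one t |>.2 (abs_le.2 ht))
    rw [indicator_of_mem ht, max_eq_left (mul_nonneg ha.le hcap), mul_rpow ha.le hcap]
  · have hcap : 1 - t ^ 2 ≤ 0 := by
      rw [mem_Icc, ← abs_le, ← sq_le_one_iff_abs_le_one] at ht
      linarith
    rw [indicator_of_notMem ht, max_eq_right (mul_nonpos_of_nonneg_of_nonpos ha.le hcap),
      zero_rpow hα, mul_zero]

lemma integrable_capPow (hα : 0 < α) (a : ℝ) : Integrable (capPow α a) := by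
  have hcont : Continuous (capPow α a) :=
    (by fun_prop : Continuous fun s : ℝ => max (a - s ^ 2 / 2) 0).rpow_const fun _ => .inr hα.le
  refine hcont.integrable_of_hasCompactSupport <|
    .intro (isCompact_Icc (a := -√(2 * a)) (b := √(2 * a))) fun s hs => ?_
  have hcap : a - s ^ 2 / 2 ≤ 0 := by
    by_contra! h
    exact hs (abs_le.1 (abs_le_sqrt (by linarith)))
  rw [capPow, max_eq_right hcap, zero_rpow hα.ne']

lemma setIntegral_Ioi_capPow (hα : 0 < α) {a : ℝ} (ha : 0 < a) (c : ℝ) :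
    ∫ s in Ioi c, capPow α a s
      = 2 * π * (Ialpha α * (a ^ (1 / 2 + α) * (1 - Upsilon α (c / √(2 * a))))) := by
  have hwidth : 0 < √(2 * a) := by positivity
  have hscale := integral_comp_mul_left_Ioi' (capPow α a) (c / √(2 * a)) hwidth
  simp only [mul_div_cancel₀ c hwidth.ne', capPow_sqrt_mul hα.ne' ha, smul_eq_mul] at hscale
  rw [← hscale, integral_const_mul, setIntegral_Ioi_one_sub_sq_rpow (by linarith),
    rpow_add ha, ← sqrt_eq_rpow, sqrt_mul zero_le_two]
  linear_combination (√a * a ^ α * π * Ialpha α * (1 - Upsilon α (c / (√2 * √a)))) *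
    mul_self_sqrt (zero_le_two (α := ℝ))

lemma setIntegral_Iic_comp_const_sub (f : ℝ → ℝ) (c m : ℝ) :
    ∫ s in Iic m, f (c - s) = ∫ s in Ioi (c - m), f s := by
  have h := (Measure.measurePreserving_sub_left volume c).setIntegral_preimage_emb
    (MeasurableEquiv.subLeft c).measurableEmbedding f (Ici (c - m))
  rwa [preimage_const_sub_Ici, sub_sub_cancel, integral_Ici_eq_integral_Ioi] at h

/-- Two parabolas of equal curvature cross exactly once, at `lam + (a - b) / (2 * lam)`, so the
minimum splits into a right tail of the first cap and a left tail of the second. -/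
lemma integral_min_capPow (hα : 0 < α) {a b lam : ℝ} (ha : 0 < a) (hb : 0 < b) (hlam : 0 < lam) :
    ∫ s, min (capPow α a s) (capPow α b (s - 2 * lam))
      = 2 * π * (Ialpha α *
          (a ^ (1 / 2 + α) * (1 - Upsilon α ((lam + (a - b) / (2 * lam)) / √(2 * a))) +
           b ^ (1 / 2 + α) * (1 - Upsilon α ((lam + (b - a) / (2 * lam)) / √(2 * b))))) := by
  set m := lam + (a - b) / (2 * lam)
  have hm : 2 * lam * m = 2 * lam ^ 2 + (a - b) := by
    simp only [m]
    field_simp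
  have hright : ∀ s ∈ Ioi m, min (capPow α a s) (capPow α b (s - 2 * lam)) = capPow α a s :=
    fun s hs => min_eq_left <| capPow_le_capPow hα.le <| by
      nlinarith [mul_lt_mul_of_pos_left (mem_Ioi.1 hs) hlam]
  have hleft : ∀ s ∈ Iic m,
      min (capPow α a s) (capPow α b (s - 2 * lam)) = capPow α b (2 * lam - s) :=
    fun s hs => by
      rw [capPow, capPow, sub_sq_comm s, ← capPow, ← capPow]
      exact min_eq_right <| capPow_le_capPow hα.le <| by
        nlinarith [mul_le_mul_of_nonneg_left (mem_Iic.1 hs) hlam.le]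
  have hint : Integrable fun s => min (capPow α a s) (capPow α b (s - 2 * lam)) :=
    (integrable_capPow hα a).inf ((integrable_capPow hα b).comp_sub_right (2 * lam))
  have hreflect : 2 * lam - m = lam + (b - a) / (2 * lam) := by
    simp only [m]
    ring
  rw [← intervalIntegral.integral_Iic_add_Ioi (b := m) hint.integrableOn hint.integrableOn,
    setIntegral_congr_fun measurableSet_Ioi hright, setIntegral_congr_fun measurableSet_Iic hleft,
    setIntegral_Iic_comp_const_sub, hreflect, setIntegral_Ioi_capPow hα ha,
    setIntegral_Ioi_capPow hα hb]
  ring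

end ParabolicCap

section RegularVariation

/-- `H` is regularly varying at `0⁺` with index `α`. For `H t = 1 - F (1 - t)` this is the
Weibull max-domain-of-attraction condition on a distribution function `F` with upper endpoint 1. -/
def RegularlyVaryingAtZero (H : ℝ → ℝ) (α : ℝ) : Prop :=
  ∀ x > 0, Tendsto (fun t => H (t * x) / H t) (𝓝[>] 0) (𝓝 (x ^ α))

namespace RegularlyVaryingAtZero

variable {H : ℝ → ℝ} {α : ℝ}

lemma eventually_ne_zero (hH : RegularlyVaryingAtZero H α) : ∀ᶠ t in 𝓝[>] 0, H t ≠ 0 := by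
  have hratio := hH 1 one_pos
  simp only [mul_one, one_rpow] at hratio
  filter_upwards [hratio.eventually_ne one_ne_zero] with t ht
  exact (div_ne_zero_iff.1 ht).2

/-- Monotonicity of `H` squeezes `H (w i) / H (u i)` between the ratios at fixed multiples of
`u i`. -/
lemma tendsto_div {ι : Type*} {l : Filter ι} {u w : ι → ℝ} {q : ℝ}
    (hH : RegularlyVaryingAtZero H α) (hα : 0 < α) (hmono : Monotone H) (hnonneg : ∀ t, 0 ≤ H t)
    (hu : Tendsto u l (𝓝[>] 0)) (hw : Tendsto (fun i => w i / u i) l (𝓝 q)) :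
    Tendsto (fun i => H (w i) / H (u i)) l (𝓝 (max q 0 ^ α)) := by
  have hcont : Continuous fun z : ℝ => z ^ α := continuous_rpow_const hα.le
  have hupos : ∀ᶠ i in l, 0 < u i := hu self_mem_nhdsWithin
  refine tendsto_order.2 ⟨fun b hb => ?_, fun b hb => ?_⟩
  · rcases le_or_gt q 0 with hq | hq
    · rw [max_eq_right hq, zero_rpow hα.ne'] at hb
      exact .of_forall fun i => hb.trans_le (div_nonneg (hnonneg _) (hnonneg _))
    rw [max_eq_left hq.le] at hb
    obtain ⟨z, ⟨hbz, hz⟩, hzq⟩ : ∃ z, (b < z ^ α ∧ 0 < z) ∧ z < q :=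
      ((((hcont.tendsto q).eventually_const_lt hb).and (lt_mem_nhds hq)).filter_mono
        nhdsWithin_le_nhds |>.and self_mem_nhdsWithin).exists (f := 𝓝[<] q)
    filter_upwards [((hH z hz).comp hu).eventually_const_lt hbz, hw.eventually_const_lt hzq, hupos]
      with i hi hwi hui
    exact hi.trans_le <| div_le_div_of_nonneg_right
      (hmono (mul_comm z _ ▸ ((lt_div_iff₀ hui).1 hwi).le)) (hnonneg _)
  · obtain ⟨z, hzb, hz⟩ : ∃ z, z ^ α < b ∧ max q 0 < z :=
      (((hcont.tendsto _).eventually_lt_const hb).filter_mono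
        nhdsWithin_le_nhds |>.and self_mem_nhdsWithin).exists (f := 𝓝[>] (max q 0))
    obtain ⟨hqz, hz0⟩ := max_lt_iff.1 hz
    filter_upwards [((hH z hz0).comp hu).eventually_lt_const hzb, hw.eventually_lt_const hqz, hupos]
      with i hi hwi hui
    exact hi.trans_le' <| div_le_div_of_nonneg_right
      (hmono (mul_comm z _ ▸ ((div_lt_iff₀ hui).1 hwi).le)) (hnonneg _)

end RegularlyVaryingAtZero

end RegularVariation

section SmallAngles

variable {ι : Type*} {l : Filter ι} {u : ι → ℝ}

lemma tendsto_sqrt_nhdsGT_zero (hu : Tendsto u l (𝓝[>] 0)) :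
    Tendsto (fun i => √(u i)) l (𝓝[>] 0) := by
  obtain ⟨hu0, hupos⟩ := tendsto_nhdsWithin_iff.1 hu
  exact tendsto_nhdsWithin_iff.2 ⟨by simpa using hu0.sqrt, hupos.mono fun _ => sqrt_pos.2⟩

lemma tendsto_one_of_tendsto_one_sub_div {c : ι → ℝ} {k : ℝ} (hu : Tendsto u l (𝓝[>] 0))
    (hc : Tendsto (fun i => (1 - c i) / u i) l (𝓝 k)) : Tendsto c l (𝓝 1) := by
  obtain ⟨hu0, hupos⟩ := tendsto_nhdsWithin_iff.1 hu
  have h := (hc.mul hu0).const_sub 1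
  rw [mul_zero, sub_zero] at h
  refine h.congr' ?_
  filter_upwards [hupos] with i hi
  rw [div_mul_cancel₀ _ (ne_of_gt hi), sub_sub_cancel]

lemma tendsto_one_sub_threshold_div {c : ι → ℝ} {k : ℝ} (hu : Tendsto u l (𝓝[>] 0))
    (hc : Tendsto (fun i => (1 - c i) / u i) l (𝓝 k)) (x : ℝ) :
    Tendsto (fun i => (1 - (1 + u i * x) / c i) / u i) l (𝓝 (-x - k)) := by
  have hc1 := tendsto_one_of_tendsto_one_sub_div hu hc
  have h := (hc.const_sub (-x)).div hc1 one_ne_zero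
  rw [div_one] at h
  refine h.congr' ?_
  filter_upwards [hu self_mem_nhdsWithin, hc1.eventually_ne one_ne_zero] with i hui hci
  have hui' : u i ≠ 0 := ne_of_gt hui
  simp only [Pi.div_apply]
  field_simp
  ring

lemma tendsto_sin_sqrt_mul_div_sqrt (hu : Tendsto u l (𝓝[>] 0)) (s : ℝ) :
    Tendsto (fun i => sin (√(u i) * s) / √(u i)) l (𝓝 s) := by
  have hderiv : HasDerivAt (fun t : ℝ => sin (t * s)) s 0 := by
    simpa using ((hasDerivAt_id (0 : ℝ)).mul_const s).sin
  have hslope := hderiv.tendsto_slope_zero_right.comp (tendsto_sqrt_nhdsGT_zero hu)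
  refine hslope.congr fun i => ?_
  simp [div_eq_inv_mul]

lemma tendsto_one_sub_cos_sqrt_mul_div (hu : Tendsto u l (𝓝[>] 0)) (s : ℝ) :
    Tendsto (fun i => (1 - cos (√(u i) * s)) / u i) l (𝓝 (s ^ 2 / 2)) := by
  have h := ((tendsto_sin_sqrt_mul_div_sqrt hu (s / 2)).pow 2).const_mul 2
  rw [show 2 * (s / 2) ^ 2 = s ^ 2 / 2 by ring] at h
  refine h.congr' ?_
  filter_upwards [hu self_mem_nhdsWithin] with i hi
  rw [div_pow, sq_sqrt (le_of_lt hi), sin_sq_eq_half_sub, ← mul_div_assoc,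
    show 2 * (√(u i) * (s / 2)) = √(u i) * s by ring]
  ring

/-- Writing `ρ = cos φ`, the rotated coordinate is `cos (θ - φ)`, and `1 - ρ ~ 2 * lam ^ 2 * u`
means `φ ~ 2 * lam * √u`: the rotation is a shift of the rescaled angle by `2 * lam`. -/
lemma tendsto_one_sub_rotated_div {ρ : ι → ℝ} {lam : ℝ} (hu : Tendsto u l (𝓝[>] 0))
    (hlam : 0 ≤ lam) (hρ : Tendsto (fun i => (1 - ρ i) / u i) l (𝓝 (2 * lam ^ 2))) (s : ℝ) :
    Tendsto (fun i =>
        (1 - (ρ i * cos (√(u i) * s) + √(1 - ρ i ^ 2) * sin (√(u i) * s))) / u i)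
      l (𝓝 ((s - 2 * lam) ^ 2 / 2)) := by
  have hρ1 : Tendsto ρ l (𝓝 1) := tendsto_one_of_tendsto_one_sub_div hu hρ
  have hupos : ∀ᶠ i in l, 0 < u i := hu self_mem_nhdsWithin
  have hsqrt : Tendsto (fun i => √(1 - ρ i ^ 2) / √(u i)) l (𝓝 (2 * lam)) := by
    have h := (hρ.mul (hρ1.const_add 1)).sqrt
    rw [show 2 * lam ^ 2 * (1 + 1) = (2 * lam) ^ 2 by ring, sqrt_sq (by positivity)] at h
    refine h.congr' ?_
    filter_upwards [hupos] with i hi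
    rw [← sqrt_div' _ hi.le]
    ring_nf
  have h := (hρ.add (hρ1.mul (tendsto_one_sub_cos_sqrt_mul_div hu s))).sub
    (hsqrt.mul (tendsto_sin_sqrt_mul_div_sqrt hu s))
  rw [show 2 * lam ^ 2 + 1 * (s ^ 2 / 2) - 2 * lam * s = (s - 2 * lam) ^ 2 / 2 by ring] at h
  refine h.congr' ?_
  filter_upwards [hupos] with i hi
  rw [div_mul_div_comm, mul_self_sqrt hi.le]
  ring

end SmallAngles

section ConditionalTail

/-- The tail mass `t ↦ ν (1 - t, ∞)` of a law on the line, parametrised by the distance `t` to the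
upper endpoint 1. -/
noncomputable def upperTail (ν : Measure ℝ) (t : ℝ) : ℝ :=
  ν.real (Ioi (1 - t))

/-- The joint exceedance event as a set of polar coordinates `(r, θ)`. -/
def jointExceedance (u ρ x y : ℝ) : Set (ℝ × ℝ) :=
  {p | 1 + u * x < p.1 * cos p.2 ∧
    1 + u * y < ρ * |p.1 * cos p.2| + √(1 - ρ ^ 2) * (p.1 * sin p.2)}

/-- The conditional probability of the joint exceedance given `Θ = θ`, when `R` has law `ν`;
extended by zero outside `(-π, π)`. -/
noncomputable def angularTail (ν : Measure ℝ) (u ρ x y : ℝ) : ℝ → ℝ :=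
  (Ioo (-π) π).indicator fun θ => ν.real ((fun r => (r, θ)) ⁻¹' jointExceedance u ρ x y)

variable {ν : Measure ℝ} {u ρ x y θ : ℝ}

lemma monotone_upperTail [IsFiniteMeasure ν] : Monotone (upperTail ν) := fun _ _ h =>
  measureReal_mono (Ioi_subset_Ioi (sub_le_sub_left h 1))

lemma upperTail_nonneg (t : ℝ) : 0 ≤ upperTail ν t := measureReal_nonneg

lemma upperTail_map {Ω : Type*} [MeasurableSpace Ω] {μ : Measure Ω} [IsProbabilityMeasure μ]
    {R : Ω → ℝ} (hR : Measurable R) (t : ℝ) :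
    upperTail (μ.map R) t = 1 - μ.real {ω | R ω ≤ 1 - t} := by
  rw [upperTail, map_measureReal_apply hR measurableSet_Ioi,
    ← probReal_compl_eq_one_sub (measurableSet_le hR measurable_const)]
  congr 1
  ext ω
  simp

lemma measurableSet_jointExceedance (u ρ x y : ℝ) : MeasurableSet (jointExceedance u ρ x y) := by
  unfold jointExceedance
  measurability

lemma measurable_angularTail [IsFiniteMeasure ν] (u ρ x y : ℝ) :
    Measurable (angularTail ν u ρ x y) :=
  (measurable_measure_prodMk_right
    (measurableSet_jointExceedance u ρ x y)).ennreal_toReal.indicator measurableSet_Ioo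

lemma angularTail_nonneg (θ : ℝ) : 0 ≤ angularTail ν u ρ x y θ :=
  indicator_nonneg (fun _ _ => measureReal_nonneg) θ

lemma angularTail_le_upperTail [IsFiniteMeasure ν] (hpos : ∀ᵐ r ∂ν, 0 < r) :
    angularTail ν u ρ x y θ ≤ upperTail ν (u * -x) := by
  refine indicator_apply_le' (fun _ => ?_) fun _ => upperTail_nonneg _
  refine ENNReal.toReal_mono (measure_ne_top _ _) (measure_mono_ae ?_)
  filter_upwards [hpos] with r hr hmem
  have hX : 1 + u * x < r * cos θ := hmem.1
  have hcos : r * cos θ ≤ r := mul_le_of_le_one_right hr.le (cos_le_one θ)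
  change 1 - u * -x < r
  linarith

/-- A point of the unit disc with abscissa above `1 + u * x` has an angle of order `√u`. -/
lemma angularTail_eq_zero (hpos : ∀ᵐ r ∂ν, 0 < r) (hle : ∀ᵐ r ∂ν, r ≤ 1) (hux : 0 < 1 + u * x)
    (hθ : π ^ 2 / 2 * (u * -x) ≤ θ ^ 2) : angularTail ν u ρ x y θ = 0 := by
  refine indicator_apply_eq_zero.2 fun hmem => ?_
  rw [measureReal_def, measure_eq_zero_iff_ae_notMem.2, ENNReal.toReal_zero]
  filter_upwards [hpos, hle] with r hr hr1 hexc
  have hX : 1 + u * x < r * cos θ := hexc.1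
  have hcos : 0 < cos θ := pos_of_mul_pos_right (hux.trans hX) hr.le
  have hcos_gt : 1 + u * x < cos θ := hX.trans_le (mul_le_of_le_one_left hcos.le hr1)
  have hcos_le : cos θ ≤ 1 - 2 / π ^ 2 * θ ^ 2 :=
    cos_le_one_sub_mul_cos_sq (abs_le.2 ⟨hmem.1.le, hmem.2.le⟩)
  have hθ' : u * -x ≤ 2 / π ^ 2 * θ ^ 2 := by
    calc u * -x = 2 / π ^ 2 * (π ^ 2 / 2 * (u * -x)) := by field_simp
      _ ≤ 2 / π ^ 2 * θ ^ 2 := by gcongr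
  linarith

lemma angularTail_eq_min [IsFiniteMeasure ν] (hpos : ∀ᵐ r ∂ν, 0 < r) (hθ : θ ∈ Ioo (-π) π)
    (hcos : 0 < cos θ) (hrot : 0 < ρ * cos θ + √(1 - ρ ^ 2) * sin θ) :
    angularTail ν u ρ x y θ
      = min (upperTail ν (1 - (1 + u * x) / cos θ))
          (upperTail ν (1 - (1 + u * y) / (ρ * cos θ + √(1 - ρ ^ 2) * sin θ))) := by
  rw [← monotone_upperTail.map_min, angularTail, indicator_of_mem hθ, upperTail]
  refine measureReal_congr ?_
  filter_upwards [hpos] with r hr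
  refine propext ?_
  change (_ < r * cos θ ∧ _ < ρ * |r * cos θ| + √(1 - ρ ^ 2) * (r * sin θ)) ↔ _ < r
  rw [abs_of_pos (mul_pos hr hcos), sub_lt_comm, lt_min_iff, sub_lt_sub_iff_left,
    sub_lt_sub_iff_left, div_lt_iff₀ hcos, div_lt_iff₀ hrot]
  ring_nf

lemma integral_angularTail_comp_sqrt_mul (hu : 0 < u) :
    ∫ θ in Ioo (-π) π, ν.real ((fun r => (r, θ)) ⁻¹' jointExceedance u ρ x y)
      = √u * ∫ s, angularTail ν u ρ x y (√u * s) := by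
  have hsqrt : 0 < √u := sqrt_pos.2 hu
  rw [Measure.integral_comp_mul_left, abs_of_pos (inv_pos.2 hsqrt), smul_eq_mul,
    mul_inv_cancel_left₀ hsqrt.ne', angularTail, integral_indicator measurableSet_Ioo]

end ConditionalTail

section ConditionalLimit

variable {ι : Type*} {l : Filter ι} {ν : Measure ℝ} [IsFiniteMeasure ν] {α x y lam : ℝ}
  {u ρ : ι → ℝ}

lemma tendsto_angularTail_div_upperTail (hpos : ∀ᵐ r ∂ν, 0 < r) (hα : 0 < α)
    (hν : RegularlyVaryingAtZero (upperTail ν) α) (hu : Tendsto u l (𝓝[>] 0)) (hlam : 0 ≤ lam)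
    (hρ : Tendsto (fun i => (1 - ρ i) / u i) l (𝓝 (2 * lam ^ 2))) (s : ℝ) :
    Tendsto (fun i => angularTail ν (u i) (ρ i) x y (√(u i) * s) / upperTail ν (u i)) l
      (𝓝 (min (capPow α (-x) s) (capPow α (-y) (s - 2 * lam)))) := by
  have hcos := tendsto_one_sub_cos_sqrt_mul_div hu s
  have hrot := tendsto_one_sub_rotated_div hu hlam hρ s
  have hlimX := hν.tendsto_div hα monotone_upperTail upperTail_nonneg hu
    (tendsto_one_sub_threshold_div hu hcos x)
  have hlimY := hν.tendsto_div hα monotone_upperTail upperTail_nonneg hu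
    (tendsto_one_sub_threshold_div hu hrot y)
  have hθ : Tendsto (fun i => √(u i) * s) l (𝓝 0) := by
    simpa using ((tendsto_sqrt_nhdsGT_zero hu).mono_right nhdsWithin_le_nhds).mul_const s
  refine (hlimX.min hlimY).congr' ?_
  filter_upwards [(tendsto_one_of_tendsto_one_sub_div hu hcos).eventually_const_lt one_pos,
    (tendsto_one_of_tendsto_one_sub_div hu hrot).eventually_const_lt one_pos,
    hθ.eventually_mem (Ioo_mem_nhds (neg_lt_zero.2 pi_pos) pi_pos)] with i hcosi hroti hθi
  rw [angularTail_eq_min hpos hθi hcosi hroti, min_div_div_right (upperTail_nonneg _)]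

lemma eventually_angularTail_div_upperTail_le (hpos : ∀ᵐ r ∂ν, 0 < r) (hle : ∀ᵐ r ∂ν, r ≤ 1)
    (hα : 0 < α) (hν : RegularlyVaryingAtZero (upperTail ν) α) (hu : Tendsto u l (𝓝[>] 0)) :
    ∀ᶠ i in l, ∀ s, angularTail ν (u i) (ρ i) x y (√(u i) * s) / upperTail ν (u i)
      ≤ (Icc (-√(π ^ 2 / 2 * -x)) √(π ^ 2 / 2 * -x)).indicator
          (fun _ => max (-x) 0 ^ α + 1) s := by
  obtain ⟨hu0, hupos⟩ := tendsto_nhdsWithin_iff.1 hu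
  have hthreshold : Tendsto (fun i => 1 + u i * x) l (𝓝 1) := by
    simpa using (hu0.mul_const x).const_add 1
  have hscale : Tendsto (fun i => u i * -x / u i) l (𝓝 (-x)) := by
    refine tendsto_const_nhds.congr' (hupos.mono fun i hi => ?_)
    exact (mul_div_cancel_left₀ _ (ne_of_gt hi)).symm
  have hratio := hν.tendsto_div hα monotone_upperTail upperTail_nonneg hu hscale
  filter_upwards [hupos, hthreshold.eventually_const_lt one_pos,
    hratio.eventually_lt_const (lt_add_one _)] with i hui hxi hbound s
  by_cases hs : s ∈ Icc (-√(π ^ 2 / 2 * -x)) √(π ^ 2 / 2 * -x)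
  · rw [indicator_of_mem hs]
    exact (div_le_div_of_nonneg_right (angularTail_le_upperTail hpos)
      (upperTail_nonneg _)).trans hbound.le
  · have hs' : π ^ 2 / 2 * -x ≤ s ^ 2 := by
      by_contra! h
      exact hs (abs_le.1 (abs_le_sqrt h.le))
    have hfar : π ^ 2 / 2 * (u i * -x) ≤ (√(u i) * s) ^ 2 := by
      rw [mul_pow, sq_sqrt (le_of_lt hui), mul_left_comm]
      exact mul_le_mul_of_nonneg_left hs' (le_of_lt hui)
    rw [indicator_of_notMem hs, angularTail_eq_zero hpos hle hxi hfar, zero_div]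

lemma tendsto_integral_angularTail_div_upperTail [l.IsCountablyGenerated]
    (hpos : ∀ᵐ r ∂ν, 0 < r) (hle : ∀ᵐ r ∂ν, r ≤ 1) (hα : 0 < α)
    (hν : RegularlyVaryingAtZero (upperTail ν) α) (hu : Tendsto u l (𝓝[>] 0)) (hlam : 0 ≤ lam)
    (hρ : Tendsto (fun i => (1 - ρ i) / u i) l (𝓝 (2 * lam ^ 2))) :
    Tendsto (fun i => ∫ s, angularTail ν (u i) (ρ i) x y (√(u i) * s) / upperTail ν (u i)) l
      (𝓝 (∫ s, min (capPow α (-x) s) (capPow α (-y) (s - 2 * lam)))) := by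
  have hint : Integrable ((Icc (-√(π ^ 2 / 2 * -x)) √(π ^ 2 / 2 * -x)).indicator
      fun _ => max (-x) 0 ^ α + 1) :=
    (integrable_indicator_iff measurableSet_Icc).2 (integrableOn_const (by simp))
  refine tendsto_integral_filter_of_dominated_convergence _ (.of_forall fun i => ?_) ?_ hint
    (.of_forall (tendsto_angularTail_div_upperTail hpos hα hν hu hlam hρ))
  · exact (((measurable_angularTail _ _ _ _).comp (measurable_const_mul _)).div_const
      _).aestronglyMeasurable
  · filter_upwards [eventually_angularTail_div_upperTail_le hpos hle hα hν hu] with i hi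
    refine .of_forall fun s => ?_
    rw [norm_of_nonneg (div_nonneg (angularTail_nonneg _) (upperTail_nonneg _))]
    exact hi s

end ConditionalLimit

section Polar

variable {Ω : Type*} [MeasurableSpace Ω] {μ : Measure Ω} [IsProbabilityMeasure μ] {R Θ : Ω → ℝ}

lemma measureReal_prodMk_mem_of_uniform_angle (hR : Measurable R) (hΘ : Measurable Θ)
    (hΘunif : μ.map Θ = (ENNReal.ofReal (2 * π))⁻¹ • volume.restrict (Ioo (-π) π))
    (hindep : IndepFun R Θ μ) {S : Set (ℝ × ℝ)} (hS : MeasurableSet S) :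
    μ.real {ω | (R ω, Θ ω) ∈ S}
      = (2 * π)⁻¹ * ∫ θ in Ioo (-π) π, (μ.map R).real ((fun r => (r, θ)) ⁻¹' S) := by
  have : IsProbabilityMeasure (μ.map R) := Measure.isProbabilityMeasure_map hR.aemeasurable
  have : IsProbabilityMeasure (μ.map Θ) := Measure.isProbabilityMeasure_map hΘ.aemeasurable
  have hprod : μ {ω | (R ω, Θ ω) ∈ S} = ((μ.map R).prod (μ.map Θ)) S := by
    rw [← (indepFun_iff_map_prod_eq_prod_map_map hR.aemeasurable hΘ.aemeasurable).1 hindep,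
      Measure.map_apply (hR.prodMk hΘ) hS]
    rfl
  simp only [measureReal_def]
  rw [hprod, Measure.prod_apply_symm hS, hΘunif, lintegral_smul_measure, smul_eq_mul,
    ENNReal.toReal_mul, ENNReal.toReal_inv, ENNReal.toReal_ofReal (by positivity),
    integral_toReal (measurable_measure_prodMk_right hS).aemeasurable
      (.of_forall fun θ => measure_lt_top _ _)]

theorem joint_tail_half_skew_weibull_general (hR : Measurable R) (hΘ : Measurable Θ)
    (hRpos : ∀ᵐ ω ∂μ, 0 < R ω) (hRle : ∀ᵐ ω ∂μ, R ω ≤ 1)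
    (hΘunif : μ.map Θ = (ENNReal.ofReal (2 * π))⁻¹ • volume.restrict (Ioo (-π) π))
    (hindep : IndepFun R Θ μ) {α : ℝ} (hα : 0 < α)
    (hWeibull : RegularlyVaryingAtZero (fun t => 1 - μ.real {ω | R ω ≤ 1 - t}) α)
    {ι : Type*} {l : Filter ι} [l.IsCountablyGenerated] {c u ρ : ι → ℝ}
    (hu : Tendsto u l (𝓝[>] 0))
    (hc : Tendsto (fun i => c i * √(u i) * (1 - μ.real {ω | R ω ≤ 1 - u i})) l (𝓝 1))
    {lam : ℝ} (hlam : 0 < lam) (hρ : Tendsto (fun i => (1 - ρ i) / u i) l (𝓝 (2 * lam ^ 2)))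
    {x y : ℝ} (hx : x < 0) (hy : y < 0) :
    Tendsto (fun i => c i * μ.real {ω | 1 + u i * x < R ω * cos (Θ ω) ∧
        1 + u i * y < ρ i * |R ω * cos (Θ ω)| + √(1 - ρ i ^ 2) * (R ω * sin (Θ ω))}) l
      (𝓝 (Ialpha α *
        (|x| ^ (1 / 2 + α) * (1 - Upsilon α ((lam + (y - x) / (2 * lam)) / √(2 * |x|))) +
         |y| ^ (1 / 2 + α) * (1 - Upsilon α ((lam + (x - y) / (2 * lam)) / √(2 * |y|)))))) := by
  have : IsProbabilityMeasure (μ.map R) := Measure.isProbabilityMeasure_map hR.aemeasurable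
  simp_rw [← upperTail_map hR] at hWeibull hc
  have hlim := (hc.mul (tendsto_integral_angularTail_div_upperTail
    ((ae_map_iff hR.aemeasurable measurableSet_Ioi).2 hRpos)
    ((ae_map_iff hR.aemeasurable measurableSet_Iic).2 hRle)
    hα hWeibull hu hlam.le hρ (x := x) (y := y))).const_mul (2 * π)⁻¹
  rw [integral_min_capPow hα (neg_pos.2 hx) (neg_pos.2 hy) hlam, one_mul,
    inv_mul_cancel_left₀ two_pi_pos.ne', neg_sub_neg, neg_sub_neg, ← abs_of_neg hx,
    ← abs_of_neg hy] at hlim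
  refine hlim.congr' ?_
  filter_upwards [hu self_mem_nhdsWithin, hu.eventually hWeibull.eventually_ne_zero]
    with i hui htail
  have hpolar := measureReal_prodMk_mem_of_uniform_angle hR hΘ hΘunif hindep
    (measurableSet_jointExceedance (u i) (ρ i) x y)
  rw [integral_angularTail_comp_sqrt_mul hui] at hpolar
  rw [integral_div, mul_assoc (c i * _), mul_div_cancel₀ _ htail]
  refine Eq.trans ?_ (congrArg (c i * ·) hpolar.symm)
  ring

end Polar

theorem joint_tail_half_skew_weibull
{Ω : Type*} [MeasurableSpace Ω] (μ : Measure Ω) [IsProbabilityMeasure μ]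
    (R Θ : Ω → ℝ) (hRm : Measurable R) (hΘm : Measurable Θ)
    (hRpos : ∀ᵐ ω ∂μ, 0 < R ω)
    (hΘunif : μ.map Θ = (ENNReal.ofReal (2 * π))⁻¹ • volume.restrict (Ioo (-π) π))
    (hindep : IndepFun R Θ μ)
    (X Y : Ω → ℝ)
    (hX : X = fun ω => R ω * Real.cos (Θ ω))
    (hY : Y = fun ω => R ω * Real.sin (Θ ω))
    (F : ℝ → ℝ)
    (hF : F = fun x => (μ {ω | R ω ≤ x}).toReal)
    (hend1 : ∀ x < 1, F x < 1) (hend2 : ∀ x, 1 ≤ x → F x = 1)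
    (α : ℝ) (hα : 0 < α)
    (hWeibull : ∀ x > 0, Tendsto (fun t => (1 - F (1 - t * x)) / (1 - F (1 - t)))
      (nhdsWithin 0 (Ioi 0)) (𝓝 (x ^ α)))
    (u : ℕ → ℝ) (hupos : ∀ n, 0 < u n) (hudec : StrictAnti u)
    (hu0 : Tendsto u atTop (𝓝 0))
    (hun : Tendsto (fun n : ℕ => (n : ℝ) * Real.sqrt (u n) * (1 - F (1 - u n))) atTop (𝓝 1))
    (ρ : ℕ → ℝ) (hρ : ∀ n, ρ n ∈ Ioc (0 : ℝ) 1)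
    (lam : ℝ) (hlam : 0 < lam)
    (hHR : Tendsto (fun n : ℕ => (1 - ρ n) / u n) atTop (𝓝 (2 * lam ^ 2))) :
    ∀ x < (0 : ℝ), ∀ y < (0 : ℝ),
      Tendsto (fun n : ℕ =>
          (n : ℝ) * (μ {ω | 1 + u n * x < X ω ∧
            1 + u n * y < ρ n * |X ω| + Real.sqrt (1 - ρ n ^ 2) * Y ω}).toReal)
        atTop (𝓝 (Ialpha α *
          (|x| ^ (1 / 2 + α) *
              (1 - Upsilon α ((lam + (y - x) / (2 * lam)) / Real.sqrt (2 * |x|))) +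
           |y| ^ (1 / 2 + α) *
              (1 - Upsilon α ((lam + (x - y) / (2 * lam)) / Real.sqrt (2 * |y|)))))) := by
  subst hX hY hF
  have hRle : ∀ᵐ ω ∂μ, R ω ≤ 1 :=
    (ae_iff_prob_eq_one (measurableSet_le hRm measurable_const).mem).2
      ((ENNReal.toReal_eq_one_iff _).1 (hend2 1 le_rfl))
  exact fun x hx y hy => joint_tail_half_skew_weibull_general hRm hΘm hRpos hRle hΘunif hindep hα
    hWeibull (tendsto_nhdsWithin_iff.2 ⟨hu0, .of_forall hupos⟩) hun hlam hHR hx hy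
end
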